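/- arXiv:2109.06369 — 2 statements merged into one kernel-verified Lean document; each statement's English description precedes it below -/
import Mathlib

section
/- If T is a positive m×n real matrix, then the matrix X_Γ(T) is totally positive. -/
/-!
The path-sum matrix is built one row of `T` at a time, from the top. Let `X_k` be the matrix of
sums over Γ-paths all of whose turns lie in the first `k` rows, let `t` be the next row of `T`, put
`D = diag t` and let `L` be the lower triangular matrix of ones. A path arriving from above in
column `l` either passes straight through the new row or turns in it and leaves through a column
`j < l`, with factor `t_l⁻¹ t_j`; a path starting in the new row and leaving through column `j` has
weight `t_j`. Hence `X_{k+1}` is `X_k D⁻¹ L D` with `t` appended as a last row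
(`partialXGamma_old_row`, `partialXGamma_new_row`).

This step preserves positivity of all minors (`minors_pos_step`). After the positive column scaling
`D` is removed, the columns selected by `g` are sums of the columns of `X_k D⁻¹` from `g s` on.
Subtracting consecutive columns turns them into sums over the blocks between `g s` and the next
selected column (`det_suffix_sum`, `sum_Ici_eq_sum_gap`), and by multilinearity the determinant is
a nonempty sum of minors of `X_k D⁻¹` with increasing columns (`det_sum_columns_pos`). If the new
row is selected, the same column operations turn it into the last unit vector, and expanding along
it gives the previous situation in one size less.
-/

open Finset

/-- A real matrix is totally positive if every minor (determinant of a square submatrix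
obtained by selecting rows and columns in increasing order) is positive. -/
def TotallyPositive {m n : ℕ} (A : Matrix (Fin m) (Fin n) ℝ) : Prop :=
  ∀ (r : ℕ) (f : Fin r → Fin m) (g : Fin r → Fin n),
    StrictMono f → StrictMono g → 0 < (A.submatrix f g).det

/-- A matrix is (strongly) positive if all of its entries are positive. -/
def EntrywisePos {m n : ℕ} (A : Matrix (Fin m) (Fin n) ℝ) : Prop :=
  ∀ i j, 0 < A i j

/-- The weight of the Γ-path encoded by the pair of finsets `(I, J)`.
A Γ-path with Γ-turns `(i₁,j₁), …, (i_p,j_p)`, where `i₁ < i₂ < ⋯ < i_p` and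
`j₁ > j₂ > ⋯ > j_p`, corresponds to the pair `I = {i₁,…,i_p}`, `J = {j₁,…,j_p}`;
the path runs from row vertex `i₁ = min I` to column vertex `j_p = min J`.
Its weight is `t_{i₁j₁} · ∏_{s=1}^{p−1} t_{i_{s+1} j_s}⁻¹ · t_{i_{s+1} j_{s+1}}`. -/
noncomputable def gammaWeight {m n : ℕ} (T : Matrix (Fin m) (Fin n) ℝ)
    (I : Finset (Fin m)) (J : Finset (Fin n)) : ℝ :=
  if h : I.Nonempty ∧ J.Nonempty ∧ I.card = J.card then
    let p := I.card
    let row : ℕ → Fin m := fun s => (I.sort (· ≤ ·)).getD s (I.min' h.1)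
    let col : ℕ → Fin n := fun s => (J.sort (· ≤ ·)).getD (p - 1 - s) (J.min' h.2.1)
    T (row 0) (col 0) *
      ∏ s ∈ Finset.range (p - 1),
        ((T (row (s + 1)) (col s))⁻¹ * T (row (s + 1)) (col (s + 1)))
  else 0

/-- The Γ-path-sum matrix `X_Γ(T)`: its `(i,j)` entry is the sum of the weights of all
Γ-paths from row vertex `i` to column vertex `j`. -/
noncomputable def XGamma {m n : ℕ} (T : Matrix (Fin m) (Fin n) ℝ) :
    Matrix (Fin m) (Fin n) ℝ :=
  Matrix.of fun i j =>
    ∑ I ∈ Finset.univ.filter (fun I : Finset (Fin m) => I.min = (i : WithTop (Fin m))),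
      ∑ J ∈ Finset.univ.filter (fun J : Finset (Fin n) =>
          J.min = (j : WithTop (Fin n)) ∧ J.card = I.card),
        gammaWeight T I J

/-- The weight of the L-path encoded by the pair of finsets `(I, J)`.
An L-path with turns `(i₁,j₁), …, (i_p,j_p)`, where `i₁ > i₂ > ⋯ > i_p` and
`j₁ < j₂ < ⋯ < j_p`, corresponds to `I = {i₁,…,i_p}`, `J = {j₁,…,j_p}`;
the path runs from row vertex `i₁ = max I` to column vertex `j_p = max J`. -/
noncomputable def lWeight {m n : ℕ} (T : Matrix (Fin m) (Fin n) ℝ)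
    (I : Finset (Fin m)) (J : Finset (Fin n)) : ℝ :=
  if h : I.Nonempty ∧ J.Nonempty ∧ I.card = J.card then
    let p := I.card
    let row : ℕ → Fin m := fun s => (I.sort (· ≤ ·)).getD (p - 1 - s) (I.min' h.1)
    let col : ℕ → Fin n := fun s => (J.sort (· ≤ ·)).getD s (J.min' h.2.1)
    T (row 0) (col 0) *
      ∏ s ∈ Finset.range (p - 1),
        ((T (row (s + 1)) (col s))⁻¹ * T (row (s + 1)) (col (s + 1)))
  else 0

/-- The L-path-sum matrix `X_L(T)`. -/
noncomputable def XL {m n : ℕ} (T : Matrix (Fin m) (Fin n) ℝ) :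
    Matrix (Fin m) (Fin n) ℝ :=
  Matrix.of fun i j =>
    ∑ I ∈ Finset.univ.filter (fun I : Finset (Fin m) => I.max = (i : WithBot (Fin m))),
      ∑ J ∈ Finset.univ.filter (fun J : Finset (Fin n) =>
          J.max = (j : WithBot (Fin n)) ∧ J.card = I.card),
        lWeight T I J

/-- The set of internal vertices traversed by the Γ-path encoded by `(I, J)`:
horizontal segments `{(i_s, b) : j_s ≤ b ≤ j_{s-1}}` (with `j₀` interpreted as the last
column) and vertical segments `{(a, j_s) : i_s ≤ a ≤ i_{s+1}}` (with `i_{p+1}` interpreted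
as the last row). -/
def pathVerts {m n : ℕ} (I : Finset (Fin m)) (J : Finset (Fin n)) :
    Finset (Fin m × Fin n) :=
  Finset.univ.filter fun v =>
    (∃ s ∈ Finset.range I.card,
        v.1 = (I.sort (· ≤ ·)).getD s v.1 ∧
        (J.sort (· ≤ ·)).getD (J.card - 1 - s) v.2 ≤ v.2 ∧
        (s = 0 ∨ v.2 ≤ (J.sort (· ≤ ·)).getD (J.card - s) v.2)) ∨
    (∃ s ∈ Finset.range I.card,
        v.2 = (J.sort (· ≤ ·)).getD (J.card - 1 - s) v.2 ∧
        (I.sort (· ≤ ·)).getD s v.1 ≤ v.1 ∧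
        (s + 1 = I.card ∨ v.1 ≤ (I.sort (· ≤ ·)).getD (s + 1) v.1))

/-- The sequence of matrices produced by Cauchon's Algorithm: `cauchonSeq X t` is the
matrix obtained after performing the first `t` steps, the steps being indexed by the
positions `(i,j) ∈ [m]×[n]` (1-based) in increasing reverse lexicographic order
(`(m,n)` first); the step at 1-based position `(i,j)` is performed on `cauchonSeq X t`
with `t = (m−i)·n + (n−j)`, so that the matrix `X^{(i,j)}` of Cauchon's Algorithm is
`cauchonSeq X ((m−i)·n + (n−j))`. -/
noncomputable def cauchonSeq {m n : ℕ} (X : Matrix (Fin m) (Fin n) ℝ) :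
    ℕ → Matrix (Fin m) (Fin n) ℝ
  | 0 => X
  | t + 1 =>
    let Y := cauchonSeq X t
    Matrix.of fun k l =>
      let i0 : Fin m := ⟨m - 1 - t / n,
        lt_of_le_of_lt (Nat.sub_le _ _) (by have := k.isLt; omega)⟩
      let j0 : Fin n := ⟨n - 1 - t % n,
        lt_of_le_of_lt (Nat.sub_le _ _) (by have := l.isLt; omega)⟩
      if (k : ℕ) < (i0 : ℕ) ∧ (l : ℕ) < (j0 : ℕ) then
        Y k l - Y k j0 * (Y i0 j0)⁻¹ * Y i0 l
      else Y k l

/-- The output `T = X^{(1,1)}` of Cauchon's Algorithm. -/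
noncomputable def cauchonOutput {m n : ℕ} (X : Matrix (Fin m) (Fin n) ℝ) :
    Matrix (Fin m) (Fin n) ℝ :=
  cauchonSeq X ((m - 1) * n + (n - 1))

/-- `contigMinorTL A i j` (1-based `i`, `j`) is the minor `det A[{i⋯},{j⋯}]` of the
largest contiguous submatrix of `A` with top-left corner `(i,j)`, i.e. with rows
`i, …, i+k` and columns `j, …, j+k` where `k = min(M−i, N−j)`; it is `1` (the empty
determinant) if `(i,j)` is out of range. -/
noncomputable def contigMinorTL {M N : ℕ} (A : Matrix (Fin M) (Fin N) ℝ) (i j : ℕ) : ℝ :=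
  if h : 1 ≤ i ∧ i ≤ M ∧ 1 ≤ j ∧ j ≤ N then
    (A.submatrix
      (fun s : Fin (min (M - i) (N - j) + 1) =>
        (⟨i - 1 + (s : ℕ), by have := s.isLt; omega⟩ : Fin M))
      (fun s : Fin (min (M - i) (N - j) + 1) =>
        (⟨j - 1 + (s : ℕ), by have := s.isLt; omega⟩ : Fin N))).det
  else 1

/-- `borderMinorTL A i₀ j₀ i j` (1-based indices, `i₀ < i`, `j₀ < j`) is the minor
`det A[{i₀, i⋯},{j₀, j⋯}]` with rows `{i₀} ∪ {i, …, i+k}` and columns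
`{j₀} ∪ {j, …, j+k}` where `k = min(M−i, N−j)`; when the contiguous part is out of range
(`i > M` or `j > N`) it is the single entry `A[{i₀},{j₀}]`, and it is `1` if `(i₀,j₀)`
is out of range. -/
noncomputable def borderMinorTL {M N : ℕ} (A : Matrix (Fin M) (Fin N) ℝ)
    (i₀ j₀ i j : ℕ) : ℝ :=
  if h : 1 ≤ i₀ ∧ i₀ ≤ M ∧ 1 ≤ j₀ ∧ j₀ ≤ N then
    if h2 : i₀ < i ∧ i ≤ M ∧ j₀ < j ∧ j ≤ N then
      (A.submatrix
        (fun s : Fin (min (M - i) (N - j) + 2) =>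
          if (s : ℕ) = 0 then (⟨i₀ - 1, by omega⟩ : Fin M)
          else ⟨i - 1 + ((s : ℕ) - 1), by have := s.isLt; omega⟩)
        (fun s : Fin (min (M - i) (N - j) + 2) =>
          if (s : ℕ) = 0 then (⟨j₀ - 1, by omega⟩ : Fin N)
          else ⟨j - 1 + ((s : ℕ) - 1), by have := s.isLt; omega⟩)).det
    else A ⟨i₀ - 1, by omega⟩ ⟨j₀ - 1, by omega⟩
  else 1

/-- `borderMinorBR A i j i₀ j₀` (1-based indices, `i < i₀`, `j < j₀`) is the minor
`det A[{⋯i, i₀},{⋯j, j₀}]` with rows `{i−k, …, i} ∪ {i₀}` and columns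
`{j−k, …, j} ∪ {j₀}` where `k = min(i−1, j−1)`; when the contiguous part is empty
(`i = 0` or `j = 0`) it is the single entry `A[{i₀},{j₀}]`, and it is `1` if `(i₀,j₀)`
is out of range. -/
noncomputable def borderMinorBR {M N : ℕ} (A : Matrix (Fin M) (Fin N) ℝ)
    (i j i₀ j₀ : ℕ) : ℝ :=
  if h : 1 ≤ i₀ ∧ i₀ ≤ M ∧ 1 ≤ j₀ ∧ j₀ ≤ N then
    if h2 : 1 ≤ i ∧ i < i₀ ∧ 1 ≤ j ∧ j < j₀ then
      (A.submatrix
        (fun s : Fin (min (i - 1) (j - 1) + 2) =>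
          if (s : ℕ) = min (i - 1) (j - 1) + 1 then (⟨i₀ - 1, by omega⟩ : Fin M)
          else ⟨i - 1 - min (i - 1) (j - 1) + (s : ℕ), by have := s.isLt; omega⟩)
        (fun s : Fin (min (i - 1) (j - 1) + 2) =>
          if (s : ℕ) = min (i - 1) (j - 1) + 1 then (⟨j₀ - 1, by omega⟩ : Fin N)
          else ⟨j - 1 - min (i - 1) (j - 1) + (s : ℕ), by have := s.isLt; omega⟩)).det
    else A ⟨i₀ - 1, by omega⟩ ⟨j₀ - 1, by omega⟩
  else 1
/-! ### Minors -/

/-- If all maximal minors of `A` are positive, summing the columns of `A` over blocks that follow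
one another from left to right gives a positive determinant: by multilinearity it is the sum of
the minors of `A` that pick one column from each block, and these columns come in increasing
order. -/
theorem det_sum_columns_pos {r n : ℕ} (A : Matrix (Fin r) (Fin n) ℝ)
    (hA : ∀ h : Fin r → Fin n, StrictMono h → 0 < (A.submatrix id h).det)
    (S : Fin r → Finset (Fin n)) (hne : ∀ s, (S s).Nonempty)
    (hS : ∀ s s', s < s' → ∀ a ∈ S s, ∀ b ∈ S s', a < b) :
    0 < (Matrix.of fun i s => ∑ l ∈ S s, A i l).det := by
  have key : (Matrix.of fun i s => ∑ l ∈ S s, A i l).det =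
      ∑ h ∈ Fintype.piFinset S, (A.submatrix id h).det := by
    have h1 := (Matrix.detRowAlternating (n := Fin r) (R := ℝ)).toMultilinearMap.map_sum_finset
      (fun _ l i => A i l) S
    rw [← Matrix.det_transpose]
    refine Eq.trans ?_ (h1.trans ?_)
    · change Matrix.det _ = Matrix.det _
      congr 1
      ext s i
      simp [Matrix.transpose_apply, Finset.sum_apply]
    · refine Finset.sum_congr rfl fun h _ => ?_
      rw [← Matrix.det_transpose (A.submatrix id h)]
      rfl
  rw [key]
  refine Finset.sum_pos (fun h hh => hA h fun s s' hs => ?_) ?_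
  · rw [Fintype.mem_piFinset] at hh
    exact hS s s' hs _ (hh s) _ (hh s')
  · exact Fintype.piFinset_nonempty.2 hne

/-- The columns `l` from `g s` on that precede every later selected column `g s'`. -/
def gap {r n : ℕ} (g : Fin r → Fin n) (s : Fin r) : Finset (Fin n) :=
  Finset.univ.filter fun l => g s ≤ l ∧ ∀ s', s < s' → l < g s'

theorem gap_nonempty {r n : ℕ} {g : Fin r → Fin n} (hg : StrictMono g) (s : Fin r) :
    (gap g s).Nonempty :=
  ⟨g s, by simpa [gap] using fun s' h => hg h⟩

theorem gap_lt {r n : ℕ} {g : Fin r → Fin n} (s s' : Fin r) (h : s < s') :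
    ∀ a ∈ gap g s, ∀ b ∈ gap g s', a < b := by
  intro a ha b hb
  simp only [gap, Finset.mem_filter, Finset.mem_univ, true_and] at ha hb
  exact (ha.2 s' h).trans_le hb.1

theorem sum_Ici_eq_sum_gap {r n : ℕ} {g : Fin r → Fin n} (hg : StrictMono g)
    (a : Fin n → ℝ) (s : Fin r) :
    ∑ l ∈ Finset.Ici (g s), a l = ∑ s' ∈ Finset.Ici s, ∑ l ∈ gap g s', a l := by
  rw [← Finset.sum_biUnion]
  · refine Finset.sum_congr ?_ fun _ _ => rfl
    ext l
    simp only [Finset.mem_Ici, Finset.mem_biUnion, gap, Finset.mem_filter, Finset.mem_univ,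
      true_and]
    constructor
    · intro hl
      let F := Finset.univ.filter fun s' => g s' ≤ l
      have hF : F.Nonempty := ⟨s, by simpa [F] using hl⟩
      refine ⟨F.max' hF, F.le_max' s (by simpa [F] using hl), ?_, fun s' hs' => ?_⟩
      · simpa [F] using F.max'_mem hF
      · by_contra! hc
        exact absurd (F.le_max' s' (by simpa [F] using hc)) (not_le.2 hs')
    · rintro ⟨s', hs', hl, -⟩
      exact (hg.monotone hs').trans hl
  · intro x _ y _ hxy
    rw [Function.onFun, Finset.disjoint_left]
    intro a hx hy
    rcases lt_or_gt_of_ne hxy with h | h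
    · exact lt_irrefl _ (gap_lt x y h a hx a hy)
    · exact lt_irrefl _ (gap_lt y x h a hy a hx)

/-- Replacing each column by the sum of itself and all later columns is multiplication by a
unitriangular matrix. -/
theorem det_suffix_sum {r : ℕ} (N : Matrix (Fin r) (Fin r) ℝ) :
    (Matrix.of fun i s => ∑ s' ∈ Finset.Ici s, N i s').det = N.det := by
  have h : (Matrix.of fun i s => ∑ s' ∈ Finset.Ici s, N i s') =
      N * (Matrix.of fun s' s => if s ≤ s' then (1 : ℝ) else 0) := by
    ext i s
    simp only [Matrix.of_apply, Matrix.mul_apply, mul_ite, mul_one, mul_zero]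
    rw [← Finset.sum_filter]
    congr 1
    ext; simp
  have hdet : (Matrix.of fun s' s : Fin r => if s ≤ s' then (1 : ℝ) else 0).det = 1 := by
    rw [Matrix.det_of_isLowerTriangular]
    · simp
    · intro i j hij
      have hij : i < j := hij
      simp [hij]
  rw [h, Matrix.det_mul, hdet, mul_one]

/-- One row step. The rows of `Y` above `k` are those of `X D⁻¹ L D`, where `D = diag t` and `L`
is the lower triangular matrix of ones, and row `k` of `Y` is `t`. If the minors of `X` in the
rows above `k` are positive, so are the minors of `Y` in the rows up to `k`. -/
theorem minors_pos_step {m n : ℕ} (X Y : Matrix (Fin m) (Fin n) ℝ) (k : Fin m)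
    (t : Fin n → ℝ) (ht : ∀ j, 0 < t j)
    (hY : ∀ i < k, ∀ j, Y i j = ∑ l ∈ Finset.Ici j, X i l * (t l)⁻¹ * t j)
    (hYk : ∀ j, Y k j = t j)
    (hX : ∀ (r : ℕ) (f : Fin r → Fin m) (g : Fin r → Fin n), StrictMono f → StrictMono g →
      (∀ s, f s < k) → 0 < (X.submatrix f g).det)
    (r : ℕ) (f : Fin r → Fin m) (g : Fin r → Fin n) (hf : StrictMono f) (hg : StrictMono g)
    (hfk : ∀ s, f s ≤ k) : 0 < (Y.submatrix f g).det := by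
  have scaled : ∀ (q : ℕ) (f : Fin q → Fin m), StrictMono f → (∀ s, f s < k) →
      ∀ S : Fin q → Finset (Fin n), (∀ s, (S s).Nonempty) →
      (∀ s s', s < s' → ∀ a ∈ S s, ∀ b ∈ S s', a < b) →
      0 < (Matrix.of fun i s => ∑ l ∈ S s, X (f i) l * (t l)⁻¹).det := by
    intro q f hf hfk S hne hS
    refine det_sum_columns_pos (Matrix.of fun i l => X (f i) l * (t l)⁻¹) (fun h hh => ?_) S hne hS
    have : (Matrix.of fun i l => X (f i) l * (t l)⁻¹).submatrix id h =
        Matrix.of fun i s => (t (h s))⁻¹ * X.submatrix f h i s := by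
      ext i s; simp [mul_comm]
    rw [this, Matrix.det_mul_row]
    exact mul_pos (Finset.prod_pos fun s _ => inv_pos.2 (ht _)) (hX q f h hf hh hfk)
  -- Factor out the column scaling `t` and the unitriangular suffix summation.
  have reduce : ∀ N : Matrix (Fin r) (Fin r) ℝ,
      (∀ i s, Y (f i) (g s) = t (g s) * ∑ s' ∈ Finset.Ici s, N i s') → 0 < N.det →
      0 < (Y.submatrix f g).det := by
    intro N hN hpos
    have : Y.submatrix f g = Matrix.of fun i s => t (g s) *
        (Matrix.of fun i s => ∑ s' ∈ Finset.Ici s, N i s') i s := by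
      ext i s; simp [hN]
    rw [this, Matrix.det_mul_row, det_suffix_sum]
    exact mul_pos (Finset.prod_pos fun s _ => ht _) hpos
  have row : ∀ i, f i < k → ∀ s, Y (f i) (g s) =
      t (g s) * ∑ s' ∈ Finset.Ici s, ∑ l ∈ gap g s', X (f i) l * (t l)⁻¹ := by
    intro i hi s
    rw [hY _ hi, ← sum_Ici_eq_sum_gap hg, Finset.mul_sum]
    exact Finset.sum_congr rfl fun _ _ => by ring
  by_cases hlt : ∀ s, f s < k
  · exact reduce _ (fun i s => row i (hlt i) s) (scaled r f hf hlt (gap g) (gap_nonempty hg) gap_lt)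
  · push Not at hlt
    obtain ⟨s₀, hs₀⟩ := hlt
    obtain _ | q := r
    · exact s₀.elim0
    have hlast : f (Fin.last q) = k :=
      le_antisymm (hfk _) (hs₀.trans (hf.monotone (Fin.le_last _)))
    have hlt : ∀ s : Fin q, f s.castSucc < k := fun s => hlast ▸ hf (Fin.castSucc_lt_last s)
    -- Row `k` of `Y D⁻¹` consists of ones, so it is the suffix sum of the last unit vector.
    -- Expanding along this row leaves a determinant involving only the rows above `k`.
    let N : Matrix (Fin (q + 1)) (Fin (q + 1)) ℝ := Matrix.of fun i s =>
      Fin.lastCases (motive := fun _ => ℝ) (if s = Fin.last q then 1 else 0)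
        (fun i => ∑ l ∈ gap g s, X (f i.castSucc) l * (t l)⁻¹) i
    refine reduce N (fun i s => ?_) ?_
    · refine Fin.lastCases ?_ (fun i => ?_) i
      · simp [N, hlast, hYk, Fin.le_last]
      · simpa [N] using row i.castSucc (hlt i) s
    · rw [Matrix.det_succ_row N (Fin.last q), Finset.sum_eq_single (Fin.last q)]
      · have hsub : N.submatrix (Fin.last q).succAbove (Fin.last q).succAbove =
            Matrix.of fun i s : Fin q =>
              ∑ l ∈ gap g s.castSucc, X (f i.castSucc) l * (t l)⁻¹ := by
          ext i s; simp [N]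
        rw [hsub]
        have := scaled q (fun s => f s.castSucc) (fun a b h => hf (Fin.castSucc_lt_castSucc_iff.2 h))
          hlt (fun s => gap g s.castSucc) (fun s => gap_nonempty hg _)
          (fun s s' h => gap_lt _ _ (Fin.castSucc_lt_castSucc_iff.2 h))
        simpa [N, ← two_mul] using this
      · intro s _ hs
        simp [N, hs]
      · simp

/-! ### Γ-paths through a new last row -/

theorem gammaWeight_singleton {m n : ℕ} (T : Matrix (Fin m) (Fin n) ℝ) (i : Fin m) (j : Fin n) :
    gammaWeight T {i} {j} = T i j := by
  simp [gammaWeight]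

theorem sort_insert_max {m : ℕ} {I : Finset (Fin m)} {k : Fin m} (h : ∀ a ∈ I, a < k) :
    (insert k I).sort (· ≤ ·) = I.sort (· ≤ ·) ++ [k] := by
  have hk : k ∉ I := fun hk => lt_irrefl _ (h k hk)
  refine List.Perm.eq_of_pairwise' (r := (· ≤ ·)) (Finset.pairwise_sort _ _) ?_ ?_
  · rw [List.pairwise_append]
    refine ⟨Finset.pairwise_sort _ _, by simp, ?_⟩
    simpa using fun a ha => (h a ha).le
  · refine (List.perm_ext_iff_of_nodup (Finset.sort_nodup _ _) ?_).2 (by simp [or_comm])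
    rw [List.nodup_append]
    exact ⟨Finset.sort_nodup _ _, by simp, by simpa using fun a ha => (h a ha).ne⟩

/-- The weight of a Γ-path extended by one turn at `(k, j)`, below and to the left of all its
turns, the last of which is in column `l`. -/
theorem gammaWeight_insert {m n : ℕ} (T : Matrix (Fin m) (Fin n) ℝ)
    {I : Finset (Fin m)} {J : Finset (Fin n)} {k : Fin m} {j l : Fin n}
    (hI : ∀ a ∈ I, a < k) (hJ : ∀ b ∈ J, j < b) (hc : J.card = I.card)
    (hl : J.min = (l : WithTop (Fin n))) :
    gammaWeight T (insert k I) (insert j J) = gammaWeight T I J * (T k l)⁻¹ * T k j := by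
  have hlJ : l ∈ J := Finset.mem_of_min hl
  have hJn : J.Nonempty := ⟨l, hlJ⟩
  have hIn : I.Nonempty := by rw [← Finset.card_pos, ← hc]; exact Finset.card_pos.2 hJn
  have hkI : k ∉ I := fun h => lt_irrefl _ (hI k h)
  have hjJ : j ∉ J := fun h => lt_irrefl _ (hJ j h)
  have hpos := hIn.card_pos
  have hsJ : (insert j J).sort (· ≤ ·) = j :: J.sort (· ≤ ·) :=
    Finset.sort_insert (· ≤ ·) (fun b hb => (hJ b hb).le) hjJ
  have hl0 : ∀ d, (J.sort (· ≤ ·)).getD 0 d = l := by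
    intro d
    have := Finset.sorted_zero_eq_min' (s := J) (h := by simpa using hJn.card_pos)
    rw [List.getD_eq_getElem _ _ (by simpa using hJn.card_pos), this]
    exact (Finset.min'_eq_iff _ hJn l).2 ⟨hlJ, fun b hb => Finset.min_le_of_eq hb hl⟩
  -- All list look-ups below are within range, so the default values are irrelevant.
  obtain ⟨p, hp⟩ : ∃ p, I.card = p + 1 := ⟨I.card - 1, by omega⟩
  have row_lt : ∀ s, s < p + 1 → ∀ d d',
      (I.sort (· ≤ ·) ++ [k]).getD s d = (I.sort (· ≤ ·)).getD s d' := by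
    intro s hs d d'
    rw [List.getD_append _ _ _ _ (by simpa [hp] using hs),
      List.getD_eq_getElem _ _ (by simpa [hp] using hs),
      List.getD_eq_getElem _ _ (by simpa [hp] using hs)]
  have row_last : ∀ d, (I.sort (· ≤ ·) ++ [k]).getD (p + 1) d = k := by
    intro d
    rw [List.getD_append_right _ _ _ _ (by simp [hp])]
    simp [hp]
  have col_lt : ∀ s, s < p + 1 → ∀ d d',
      (j :: J.sort (· ≤ ·)).getD (p + 1 - s) d = (J.sort (· ≤ ·)).getD (p - s) d' := by
    intro s hs d d'
    rw [show p + 1 - s = (p - s) + 1 by omega, List.getD_cons_succ,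
      List.getD_eq_getElem _ _ (by simp [hc, hp]),
      List.getD_eq_getElem _ _ (by simp [hc, hp])]
  rw [gammaWeight, gammaWeight,
    dif_pos ⟨Finset.insert_nonempty _ _, Finset.insert_nonempty _ _, by
      rw [Finset.card_insert_of_notMem hkI, Finset.card_insert_of_notMem hjJ, hc]⟩,
    dif_pos ⟨hIn, hJn, hc.symm⟩]
  simp only [Finset.card_insert_of_notMem hkI, hp, sort_insert_max hI, hsJ, Nat.add_sub_cancel]
  rw [Finset.prod_range_succ, row_last, row_lt 0 (by omega) _ (I.min' hIn),
    col_lt 0 (by omega) _ (J.min' hJn), col_lt p (by omega) _ (J.min' hJn), Nat.sub_self, hl0,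
    Nat.sub_self, List.getD_cons_zero]
  rw [← mul_assoc, ← mul_assoc]
  congr 3
  refine Finset.prod_congr rfl fun s hs => ?_
  rw [Finset.mem_range] at hs
  rw [row_lt (s + 1) (by omega) _ (I.min' hIn), col_lt s (by omega) _ (J.min' hJn),
    col_lt (s + 1) (by omega) _ (J.min' hJn)]

/-- The pairs `(I, J)` encoding the Γ-paths from row vertex `i` to column vertex `j` all of whose
turns lie in the first `k` rows. -/
def gammaPaths {m n : ℕ} (k : ℕ) (i : Fin m) (j : Fin n) :
    Finset (Finset (Fin m) × Finset (Fin n)) :=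
  Finset.univ.filter fun p => p.1.min = (i : WithTop (Fin m)) ∧
    p.2.min = (j : WithTop (Fin n)) ∧ p.2.card = p.1.card ∧ ∀ a ∈ p.1, (a : ℕ) < k

/-- The path-sum matrix of the Γ-paths confined to the first `k` rows. Its rows of index at least
`k` vanish. -/
noncomputable def partialXGamma {m n : ℕ} (T : Matrix (Fin m) (Fin n) ℝ) (k : ℕ) :
    Matrix (Fin m) (Fin n) ℝ :=
  Matrix.of fun i j => ∑ p ∈ gammaPaths k i j, gammaWeight T p.1 p.2

theorem mem_gammaPaths {m n : ℕ} {k : ℕ} {i : Fin m} {j : Fin n}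
    {p : Finset (Fin m) × Finset (Fin n)} :
    p ∈ gammaPaths k i j ↔ p.1.min = (i : WithTop (Fin m)) ∧
    p.2.min = (j : WithTop (Fin n)) ∧ p.2.card = p.1.card ∧ ∀ a ∈ p.1, (a : ℕ) < k := by
  simp [gammaPaths]

theorem partialXGamma_full {m n : ℕ} (T : Matrix (Fin m) (Fin n) ℝ) :
    partialXGamma T m = XGamma T := by
  ext i j
  simp only [partialXGamma, XGamma, Matrix.of_apply]
  rw [Finset.sum_sigma']
  refine Finset.sum_bij' (fun p _ => ⟨p.1, p.2⟩) (fun p _ => (p.1, p.2)) ?_ ?_ ?_ ?_ ?_ <;>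
    simp +contextual [mem_gammaPaths]

theorem partialXGamma_new_row {m n : ℕ} (T : Matrix (Fin m) (Fin n) ℝ) (k : Fin m) (j : Fin n) :
    partialXGamma T (k + 1) k j = T k j := by
  have : gammaPaths (k + 1) k j = {({k}, {j})} := by
    ext ⟨I, J⟩
    simp only [mem_gammaPaths, Finset.mem_singleton, Prod.mk.injEq]
    constructor
    · rintro ⟨hI, hJ, hc, hk⟩
      have hI' : I = {k} := by
        ext a
        rw [Finset.mem_singleton]
        refine ⟨fun ha => le_antisymm (Fin.le_def.2 (Nat.lt_succ_iff.1 (hk a ha)))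
          (Finset.min_le_of_eq ha hI), ?_⟩
        rintro rfl
        exact Finset.mem_of_min hI
      refine ⟨hI', ?_⟩
      rw [hI', Finset.card_singleton, Finset.card_eq_one] at hc
      obtain ⟨b, rfl⟩ := hc
      rw [Finset.mem_singleton.1 (Finset.mem_of_min hJ)]
    · rintro ⟨rfl, rfl⟩
      simp
  simp [partialXGamma, this, gammaWeight_singleton]

theorem min_insert_of_lt {n : ℕ} {J : Finset (Fin n)} {j : Fin n} (h : ∀ b ∈ J, j < b) :
    (insert j J).min = (j : WithTop (Fin n)) := by
  rw [Finset.min_insert, min_eq_left]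
  exact Finset.le_min fun b hb => WithTop.coe_le_coe.2 (h b hb).le

/-- A Γ-path confined to the rows up to `k` either has no turn in row `k` or extends, by a turn at
`(k, j)`, a Γ-path in the rows above `k` that ends in a column `l > j`. On the right-hand side the
former are the term `l = j`, as `T k j ≠ 0`. -/
theorem partialXGamma_old_row {m n : ℕ} (T : Matrix (Fin m) (Fin n) ℝ) (hT : EntrywisePos T)
    (k i : Fin m) (hik : i < k) (j : Fin n) :
    partialXGamma T (k + 1) i j =
      ∑ l ∈ Finset.Ici j, partialXGamma T k i l * (T k l)⁻¹ * T k j := by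
  rw [← Finset.Ioi_insert, Finset.sum_insert (by simp), mul_assoc _ (T k j)⁻¹,
    inv_mul_cancel₀ (hT k j).ne', mul_one]
  simp only [partialXGamma, Matrix.of_apply]
  rw [← Finset.sum_filter_add_sum_filter_not (gammaPaths (k + 1) i j) (fun p => k ∉ p.1)]
  congr 1
  · refine Finset.sum_congr ?_ fun _ _ => rfl
    ext ⟨I, J⟩
    simp only [Finset.mem_filter, mem_gammaPaths]
    constructor
    · rintro ⟨⟨hI, hJ, hc, hk⟩, hkI⟩
      refine ⟨hI, hJ, hc, fun a ha => ?_⟩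
      have := hk a ha
      have : a ≠ k := fun h => hkI (h ▸ ha)
      have := Fin.val_ne_of_ne this
      omega
    · rintro ⟨hI, hJ, hc, hk⟩
      exact ⟨⟨hI, hJ, hc, fun a ha => (hk a ha).trans (Nat.lt_succ_self _)⟩,
        fun h => lt_irrefl _ (hk k h)⟩
  · simp only [Finset.sum_mul]
    rw [Finset.sum_sigma']
    symm
    have gt : ∀ {l : Fin n} {J : Finset (Fin n)}, j < l → J.min = (l : WithTop (Fin n)) →
        ∀ b ∈ J, j < b := fun h hJ b hb => h.trans_le (Finset.min_le_of_eq hb hJ)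
    refine Finset.sum_bij (fun p _ => (insert k p.2.1, insert j p.2.2)) ?_ ?_ ?_ ?_
    · rintro ⟨l, I, J⟩ h
      simp only [Finset.mem_sigma, Finset.mem_Ioi, mem_gammaPaths] at h
      obtain ⟨hl, hI, hJ, hc, hk⟩ := h
      have hkI : k ∉ I := fun h => lt_irrefl _ (hk k h)
      have hjJ : j ∉ J := fun h => lt_irrefl _ (gt hl hJ j h)
      simp only [Finset.mem_filter, mem_gammaPaths]
      refine ⟨⟨?_, min_insert_of_lt (gt hl hJ), ?_, ?_⟩, by simp⟩
      · rw [Finset.min_insert, hI, min_eq_right (WithTop.coe_le_coe.2 hik.le)]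
      · rw [Finset.card_insert_of_notMem hkI, Finset.card_insert_of_notMem hjJ, hc]
      · intro a ha
        rcases Finset.mem_insert.1 ha with rfl | ha
        · exact Nat.lt_succ_self _
        · exact (hk a ha).trans (Nat.lt_succ_self _)
    · rintro ⟨l, I, J⟩ h ⟨l', I', J'⟩ h' heq
      simp only [Finset.mem_sigma, Finset.mem_Ioi, mem_gammaPaths] at h h'
      obtain ⟨hl, hI, hJ, hc, hk⟩ := h
      obtain ⟨hl', hI', hJ', hc', hk'⟩ := h'
      simp only [Prod.mk.injEq] at heq
      have e1 : I = I' := by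
        rw [← Finset.erase_insert (fun h => lt_irrefl _ (hk k h)), heq.1,
          Finset.erase_insert (fun h => lt_irrefl _ (hk' k h))]
      have e2 : J = J' := by
        rw [← Finset.erase_insert (fun h => lt_irrefl _ (gt hl hJ j h)), heq.2,
          Finset.erase_insert (fun h => lt_irrefl _ (gt hl' hJ' j h))]
      subst e1 e2
      rw [hJ] at hJ'
      obtain rfl := WithTop.coe_injective hJ'
      rfl
    · rintro ⟨I, J⟩ h
      simp only [Finset.mem_filter, mem_gammaPaths, not_not] at h
      obtain ⟨⟨hI, hJ, hc, hk⟩, hkI⟩ := h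
      have hjJ : j ∈ J := Finset.mem_of_min hJ
      have hiI : i ∈ I.erase k := Finset.mem_erase.2 ⟨hik.ne, Finset.mem_of_min hI⟩
      have hcard : (J.erase j).card = (I.erase k).card := by
        rw [Finset.card_erase_of_mem hkI, Finset.card_erase_of_mem hjJ, hc]
      have hne : (J.erase j).Nonempty := by
        rw [← Finset.card_pos, hcard]
        exact Finset.card_pos.2 ⟨i, hiI⟩
      obtain ⟨l, hl⟩ := Finset.min_of_nonempty hne
      have hlm := Finset.mem_erase.1 (Finset.mem_of_min hl)
      refine ⟨⟨l, I.erase k, J.erase j⟩, ?_, ?_⟩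
      · simp only [Finset.mem_sigma, Finset.mem_Ioi, mem_gammaPaths]
        refine ⟨lt_of_le_of_ne (Finset.min_le_of_eq hlm.2 hJ) hlm.1.symm, ?_, hl, hcard, ?_⟩
        · refine le_antisymm (Finset.min_le hiI) (Finset.le_min fun a ha => ?_)
          exact WithTop.coe_le_coe.2 (Finset.min_le_of_eq (Finset.mem_of_mem_erase ha) hI)
        · intro a ha
          have h1 := hk a (Finset.mem_of_mem_erase ha)
          have := Fin.val_ne_of_ne (Finset.ne_of_mem_erase ha)
          omega
      · simp [Finset.insert_erase hkI, Finset.insert_erase hjJ]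
    · rintro ⟨l, I, J⟩ h
      simp only [Finset.mem_sigma, Finset.mem_Ioi, mem_gammaPaths] at h
      obtain ⟨hl, hI, hJ, hc, hk⟩ := h
      exact (gammaWeight_insert T (fun a ha => hk a ha) (gt hl hJ) hc hJ).symm

/-- If `T` is a positive matrix then `X_Γ(T)` is totally positive. -/
theorem xGamma_totallyPositive {m n : ℕ} (T : Matrix (Fin m) (Fin n) ℝ)
    (hT : EntrywisePos T) : TotallyPositive (XGamma T) := by
  have key : ∀ k ≤ m, ∀ (r : ℕ) (f : Fin r → Fin m) (g : Fin r → Fin n), StrictMono f →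
      StrictMono g → (∀ s, (f s : ℕ) < k) → 0 < ((partialXGamma T k).submatrix f g).det := by
    intro k
    induction k with
    | zero =>
      intro _ r f g _ _ h
      obtain _ | r := r
      · simp
      · exact absurd (h 0) (Nat.not_lt_zero _)
    | succ k ih =>
      intro hk r f g hf hg h
      exact minors_pos_step (partialXGamma T k) (partialXGamma T (k + 1)) ⟨k, hk⟩
        (T ⟨k, hk⟩) (hT _) (fun i hi j => partialXGamma_old_row T hT ⟨k, hk⟩ i hi j)
        (partialXGamma_new_row T ⟨k, hk⟩)
        (fun r f g hf hg hlt => ih (by omega) r f g hf hg hlt) r f g hf hg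
        (fun s => Nat.lt_succ_iff.1 (h s))
  intro r f g hf hg
  rw [← partialXGamma_full]
  exact key m le_rfl r f g hf hg fun s => (f s).isLt
end

section
/- Let T be a positive m×n real matrix and X = X_Γ(T). For any subsets I = {i₁ < ⋯ < i_r} of [m] and J = {j₁ < ⋯ < j_r} of [n] of equal size r, the minor det X[I, J] equals the sum, over all vertex-disjoint path systems (P₁, …, P_r) where P_t is a path from row vertex i_t to column vertex j_t, of the products w(P₁)·w(P₂)⋯w(P_r) of the path weights. In particular this sum is positive, since the primary path system (each P_t having a single Γ-turn at (i_t, j_t)) is always vertex-disjoint. -/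
/-!
The proof is the tail-swapping involution of Lindström, Gessel and Viennot, carried out on a
description of paths in which swapping tails is a pointwise operation.

A Γ-path from row `i` to column `j` is determined by the weakly decreasing function `c` sending a
row `a ≥ i` to the column in which the path leaves row `a` downwards. The path occupies the
columns from `c a` to `c (a - 1)` in row `a` (from `c i` to the last column in row `i`), and its
weight is `T i (c i) * ∏ a > i, (T a (c (a - 1)))⁻¹ * T a (c a)`, where rows crossed vertically
contribute `1`. Extending `c` by the last column above row `i`, one gets a bijection `exitCol` from
pairs `(I, J)` to such functions (`IsCode.isPath`, `IsCode.exitCol_injective`,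
`IsPath.exists_code`) that respects weights (`IsCode.gammaWeight_eq`) and vertex sets
(`IsCode.mem_pathVerts`).

Expanding the determinant gives a signed sum over systems of paths `c s` from row `f s` to column
`g (σ s)`. Say that a system crosses at `(a, t)` if path `t` has started by row `a` and
`c t a ≤ c (t - 1) (a - 1)`. Take the first row `a` with a crossing and the last `t` crossing there,
and exchange the paths `t - 1` and `t` from row `a` on. Up to row `a - 1` the paths are in order, so
both exchanged paths are still weakly decreasing. The product of the weights is unchanged, since in
each row the same columns occur; the sign changes; and the new system has the same `(a, t)`,
because the rows above `a` and the crossings in row `a` beyond `t` are unaffected. So the systems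
with a crossing cancel (`det_eq_sum_of_not_crosses`). A system without crossings has `σ = 1`, and
having no crossing is the same as being vertex-disjoint (`disjoint_iff_not_crosses`).
Positivity follows since all weights are positive and the system of one-turn paths is
vertex-disjoint.
-/

open Finset

/-! ### Ranks in finite linear orders -/

/-- The index preceding `x`, with `0` sent to `0`. -/
def prv {k : ℕ} (x : Fin k) : Fin k := ⟨x - 1, by omega⟩

section SortedFinset

variable {α : Type*} [LinearOrder α]

theorem sortGetD_mem (S : Finset α) {s : ℕ} (hs : s < S.card) (d : α) :
    (S.sort (· ≤ ·)).getD s d ∈ S := by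
  have h : s < (S.sort (· ≤ ·)).length := by simpa using hs
  rw [List.getD_eq_getElem _ _ h, ← Finset.mem_sort (· ≤ ·)]
  exact List.getElem_mem h

theorem sortGetD_default (S : Finset α) {s : ℕ} (hs : s < S.card) (d d' : α) :
    (S.sort (· ≤ ·)).getD s d = (S.sort (· ≤ ·)).getD s d' := by
  have h : s < (S.sort (· ≤ ·)).length := by simpa using hs
  rw [List.getD_eq_getElem _ _ h, List.getD_eq_getElem _ _ h]

theorem sortGetD_lt (S : Finset α) {s s' : ℕ} (hss : s < s') (hs : s' < S.card) (d d' : α) :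
    (S.sort (· ≤ ·)).getD s d < (S.sort (· ≤ ·)).getD s' d' := by
  have h : s < (S.sort (· ≤ ·)).length := by simpa using hss.trans hs
  have h' : s' < (S.sort (· ≤ ·)).length := by simpa using hs
  rw [List.getD_eq_getElem _ _ h, List.getD_eq_getElem _ _ h']
  exact (Finset.sortedLT_sort S).strictMono_get (a := ⟨s, h⟩) (b := ⟨s', h'⟩) hss

theorem exists_sortGetD (S : Finset α) {x : α} (hx : x ∈ S) :
    ∃ s < S.card, ∀ d, (S.sort (· ≤ ·)).getD s d = x := by
  rw [← Finset.mem_sort (· ≤ ·)] at hx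
  obtain ⟨s, hs, rfl⟩ := List.getElem_of_mem hx
  exact ⟨s, by simpa using hs, fun d => List.getD_eq_getElem _ _ hs⟩

/-- The number of elements of `S` that are at most `a`. -/
def cnt (S : Finset α) (a : α) : ℕ := (S.filter (· ≤ a)).card

theorem cnt_le_card (S : Finset α) (a : α) : cnt S a ≤ S.card :=
  Finset.card_filter_le _ _

theorem cnt_mono (S : Finset α) : Monotone (cnt S) := fun _ _ h =>
  Finset.card_le_card (Finset.monotone_filter_right _ fun _ _ hx => le_trans hx h)

/-- Enumerating `S` increasingly and counting the elements of `S` below a bound form a Galois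
connection; every fact about ranks below is read off from it. -/
theorem sortGetD_le_iff (S : Finset α) {s : ℕ} (hs : s < S.card) (d a : α) :
    (S.sort (· ≤ ·)).getD s d ≤ a ↔ s < cnt S a := by
  constructor
  · intro h
    have hinj : Set.InjOn (fun q => (S.sort (· ≤ ·)).getD q d) (Finset.range (s + 1)) := by
      intro x hx y hy hxy
      simp only [Finset.coe_range, Set.mem_Iio] at hx hy
      rcases lt_trichotomy x y with h1 | h1 | h1
      · exact absurd hxy (sortGetD_lt S h1 (by omega) d d).ne
      · exact h1
      · exact absurd hxy (sortGetD_lt S h1 (by omega) d d).ne'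
    have hsub : (Finset.range (s + 1)).image (fun q => (S.sort (· ≤ ·)).getD q d) ⊆
        S.filter (· ≤ a) := by
      intro x hx
      simp only [Finset.mem_image, Finset.mem_range] at hx
      obtain ⟨q, hq, rfl⟩ := hx
      rw [Finset.mem_filter]
      refine ⟨sortGetD_mem S (by omega) d, ?_⟩
      rcases Nat.lt_succ_iff_lt_or_eq.1 hq with h1 | h1
      · exact (sortGetD_lt S h1 hs d d).le.trans h
      · exact h1 ▸ h
    have := Finset.card_le_card hsub
    rw [Finset.card_image_of_injOn hinj, Finset.card_range] at this
    exact this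
  · intro h
    by_contra! hlt
    have hsub : S.filter (· ≤ a) ⊆
        (Finset.range s).image (fun q => (S.sort (· ≤ ·)).getD q d) := by
      intro x hx
      rw [Finset.mem_filter] at hx
      obtain ⟨q, hq, hqx⟩ := exists_sortGetD S hx.1
      refine Finset.mem_image.2 ⟨q, Finset.mem_range.2 ?_, hqx d⟩
      by_contra! hsq
      have : (S.sort (· ≤ ·)).getD s d ≤ x := by
        rcases hsq.lt_or_eq with h1 | h1
        · exact (hqx d) ▸ (sortGetD_lt S h1 hq d d).le
        · exact (hqx d) ▸ h1 ▸ le_rfl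
      exact absurd (hlt.trans_le this) (not_lt.2 hx.2)
    have h1 := (Finset.card_le_card hsub).trans Finset.card_image_le
    rw [Finset.card_range] at h1
    unfold cnt at h
    omega

theorem cnt_sortGetD (S : Finset α) {s : ℕ} (hs : s < S.card) (d : α) :
    cnt S ((S.sort (· ≤ ·)).getD s d) = s + 1 := by
  have h1 := (sortGetD_le_iff S hs d _).1 le_rfl
  have h2 := cnt_le_card S ((S.sort (· ≤ ·)).getD s d)
  by_contra hne
  have h3 : s + 1 < S.card := by omega
  have h4 := (sortGetD_le_iff S h3 d ((S.sort (· ≤ ·)).getD s d)).2 (by omega)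
  exact absurd (sortGetD_lt S (Nat.lt_succ_self s) h3 d d) (not_lt.2 h4)

/-- An element of `S` occupies the position given by the number of smaller elements of `S`. -/
theorem sortGetD_card_lt (S : Finset α) {y : α} (hy : y ∈ S) (d : α) :
    (S.sort (· ≤ ·)).getD (S.filter (· < y)).card d = y := by
  obtain ⟨s, hs, hsy⟩ := exists_sortGetD S hy
  have h1 := cnt_sortGetD S hs d
  rw [hsy d] at h1
  have h2 : S.filter (· ≤ y) = insert y (S.filter (· < y)) := by
    ext z
    simp only [Finset.mem_filter, Finset.mem_insert, le_iff_lt_or_eq]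
    constructor
    · rintro ⟨hz, h | h⟩
      · exact Or.inr ⟨hz, h⟩
      · exact Or.inl h
    · rintro (rfl | ⟨hz, h⟩)
      · exact ⟨hy, Or.inr rfl⟩
      · exact ⟨hz, Or.inl h⟩
  unfold cnt at h1
  rw [h2, Finset.card_insert_of_notMem (by simp)] at h1
  rw [show (S.filter (· < y)).card = s by omega, hsy]

end SortedFinset

theorem cnt_eq_prv {m : ℕ} (I : Finset (Fin m)) {a : Fin m} (h0 : 0 < a.val) :
    cnt I a = cnt I (prv a) + if a ∈ I then 1 else 0 := by
  have key : ∀ x : Fin m, x ≤ a ↔ x ≤ prv a ∨ x = a := by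
    intro x
    simp only [prv, Fin.le_def, Fin.ext_iff]
    omega
  have hna : ¬ a ≤ prv a := by simp only [prv, Fin.le_def]; omega
  unfold cnt
  split_ifs with h
  · rw [← Finset.card_insert_of_notMem (a := a) (by simp [hna])]
    congr 1
    ext x
    simp only [Finset.mem_filter, Finset.mem_insert, key]
    grind
  · congr 1
    ext x
    simp only [Finset.mem_filter, key]
    grind

/-! ### Γ-paths as exit-column functions -/

/-- Given a Γ-path encoded by `(I, J)`, the column in which the path leaves row `a` downwards.
Before the path starts, i.e. in rows above `min I`, the count is `0`, so the index `J.card` is out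
of range and the value is the last column, where the path is going to enter. -/
def exitCol {m n : ℕ} [NeZero n] (P : Finset (Fin m) × Finset (Fin n)) (a : Fin m) : Fin n :=
  (P.2.sort (· ≤ ·)).getD (P.2.card - cnt P.1 a) ⊤

/-- `c` is the exit-column function of a path from row `i` to column `j`: it is weakly decreasing,
equals the last column before row `i`, and equals `j` in the last row. -/
def IsPath {m n : ℕ} (i : Fin m) (j : Fin n) (c : Fin m → Fin n) : Prop :=
  Antitone c ∧ (∀ b < i, ∀ y, y ≤ c b) ∧ ∀ b : Fin m, b.val + 1 = m → c b = j

/-- `(I, J)` encodes a Γ-path from row `i` to column `j`. -/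
def IsCode {m n : ℕ} (i : Fin m) (j : Fin n) (P : Finset (Fin m) × Finset (Fin n)) : Prop :=
  P.1.min = (i : WithTop (Fin m)) ∧ P.2.min = (j : WithTop (Fin n)) ∧ P.1.card = P.2.card

/-- The weight of a path from row `i` in terms of its exit columns: each row `a > i` contributes the
factor of the two turns in that row, which is `1` if the path crosses the row vertically. -/
noncomputable def pathWeight {m n : ℕ} (T : Matrix (Fin m) (Fin n) ℝ) (i : Fin m)
    (c : Fin m → Fin n) : ℝ :=
  T i (c i) * ∏ a ∈ Finset.univ.filter (i < ·), ((T a (c (prv a)))⁻¹ * T a (c a))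

section Code

variable {m n : ℕ} {i : Fin m} {j : Fin n} {P : Finset (Fin m) × Finset (Fin n)}

theorem IsCode.mem_row (h : IsCode i j P) : i ∈ P.1 := Finset.mem_of_min h.1

theorem IsCode.le_row (h : IsCode i j P) {a : Fin m} (ha : a ∈ P.1) : i ≤ a :=
  Finset.min_le_of_eq ha h.1

theorem IsCode.cnt_pos (h : IsCode i j P) {a : Fin m} (ha : i ≤ a) : 0 < cnt P.1 a :=
  Finset.card_pos.2 ⟨i, Finset.mem_filter.2 ⟨h.mem_row, ha⟩⟩

theorem IsCode.cnt_zero (h : IsCode i j P) {a : Fin m} (ha : a < i) : cnt P.1 a = 0 := by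
  unfold cnt
  rw [Finset.card_eq_zero, Finset.filter_eq_empty_iff]
  intro x hx
  exact not_le.2 (ha.trans_le (h.le_row hx))

theorem IsCode.cnt_le (h : IsCode i j P) (a : Fin m) : cnt P.1 a ≤ P.2.card :=
  h.2.2 ▸ cnt_le_card _ _

theorem IsCode.cnt_start (h : IsCode i j P) : cnt P.1 i = 1 := by
  unfold cnt
  rw [Finset.card_eq_one]
  refine ⟨i, ?_⟩
  ext x
  simp only [Finset.mem_filter, Finset.mem_singleton]
  constructor
  · rintro ⟨h1, h2⟩
    exact le_antisymm h2 (h.le_row h1)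
  · rintro rfl
    exact ⟨h.mem_row, le_rfl⟩

variable [NeZero n]

theorem IsCode.exitCol_mem (h : IsCode i j P) {a : Fin m} (ha : i ≤ a) :
    exitCol P a ∈ P.2 := by
  have h1 := h.cnt_pos ha
  have h2 := h.cnt_le a
  exact sortGetD_mem _ (by omega) _

theorem exitCol_eq {a : Fin m} (k : ℕ) (hk : cnt P.1 a = k) (h0 : 0 < k) (h1 : k ≤ P.2.card)
    (d : Fin n) : exitCol P a = (P.2.sort (· ≤ ·)).getD (P.2.card - k) d := by
  unfold exitCol
  rw [hk]
  exact sortGetD_default _ (by omega) _ _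

theorem IsCode.exitCol_lt (h : IsCode i j P) {a b : Fin m} (hab : cnt P.1 a < cnt P.1 b)
    (ha : i ≤ a) : exitCol P b < exitCol P a := by
  have h1 := h.cnt_pos ha
  have h2 := h.cnt_le b
  exact sortGetD_lt _ (by omega) (by omega) _ _

theorem IsCode.antitone (h : IsCode i j P) : Antitone (exitCol P) := by
  intro a b hab
  rcases (cnt_mono P.1 hab).lt_or_eq with h1 | h1
  · by_cases ha : i ≤ a
    · exact (h.exitCol_lt h1 ha).le
    · have : exitCol P a = ⊤ := by
        unfold exitCol
        rw [h.cnt_zero (not_le.1 ha)]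
        exact List.getD_eq_default _ _ (by simp)
      rw [this]
      exact le_top
  · unfold exitCol
    rw [h1]

theorem IsCode.isPath (h : IsCode i j P) : IsPath i j (exitCol P) := by
  refine ⟨h.antitone, ?_, ?_⟩
  · intro b hb y
    have : exitCol P b = ⊤ := by
      unfold exitCol
      rw [h.cnt_zero hb]
      exact List.getD_eq_default _ _ (by simp)
    rw [this]
    exact le_top
  · intro b hb
    have hcnt : cnt P.1 b = P.1.card := by
      unfold cnt
      congr 1
      rw [Finset.filter_eq_self]
      intro x _
      rw [Fin.le_def]
      omega
    have hj : j ∈ P.2 := Finset.mem_of_min h.2.1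
    have := sortGetD_card_lt P.2 hj ⊤
    rw [show P.2.filter (· < j) = ∅ from Finset.filter_eq_empty_iff.2 fun x hx =>
      not_lt.2 (Finset.min_le_of_eq hx h.2.1)] at this
    unfold exitCol
    rw [hcnt, h.2.2]
    simpa using this

/-- The rows of the Γ-turns are the starting row and the rows that the path does not cross
vertically. -/
theorem IsCode.mem_row_iff (h : IsCode i j P) (a : Fin m) :
    a ∈ P.1 ↔ a = i ∨ i < a ∧ exitCol P a < exitCol P (prv a) := by
  constructor
  · intro ha
    rcases (h.le_row ha).eq_or_lt with h1 | h1
    · exact Or.inl h1.symm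
    · have h0 : 0 < a.val := by rw [Fin.lt_def] at h1; omega
      refine Or.inr ⟨h1, h.exitCol_lt ?_ ?_⟩
      · rw [cnt_eq_prv P.1 h0, if_pos ha]; omega
      · rw [Fin.lt_def] at h1
        simp only [prv, Fin.le_def]; omega
  · rintro (rfl | ⟨h1, h2⟩)
    · exact h.mem_row
    · have h0 : 0 < a.val := by rw [Fin.lt_def] at h1; omega
      by_contra ha
      have := cnt_eq_prv P.1 h0
      rw [if_neg ha] at this
      unfold exitCol at h2
      rw [this] at h2
      exact lt_irrefl _ h2

theorem IsCode.col_eq (h : IsCode i j P) : P.2 = P.1.image (exitCol P) := by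
  ext y
  rw [Finset.mem_image]
  constructor
  · intro hy
    obtain ⟨q, hq, hqy⟩ := exists_sortGetD _ hy
    have hs : P.2.card - 1 - q < P.1.card := by have := h.2.2; omega
    refine ⟨(P.1.sort (· ≤ ·)).getD (P.2.card - 1 - q) i, sortGetD_mem _ hs _, ?_⟩
    unfold exitCol
    rw [cnt_sortGetD _ hs, show P.2.card - (P.2.card - 1 - q + 1) = q by omega]
    exact hqy _
  · rintro ⟨a, ha, rfl⟩
    exact h.exitCol_mem (h.le_row ha)

theorem IsCode.exitCol_injective {P' : Finset (Fin m) × Finset (Fin n)} (h : IsCode i j P)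
    (h' : IsCode i j P') (he : exitCol P = exitCol P') : P = P' := by
  have h1 : P.1 = P'.1 := by
    ext a
    rw [h.mem_row_iff, h'.mem_row_iff, he]
  refine Prod.ext h1 ?_
  rw [h.col_eq, h'.col_eq, he, h1]

theorem IsPath.exists_code {c : Fin m → Fin n} (h : IsPath i j c) :
    ∃ P, IsCode i j P ∧ exitCol P = c := by
  obtain ⟨hanti, hpre, hend⟩ := h
  set I : Finset (Fin m) :=
    Finset.univ.filter fun a => a = i ∨ i < a ∧ c a < c (prv a) with hI
  have hIi : ∀ x ∈ I, i ≤ x := by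
    intro x hx
    rw [hI, Finset.mem_filter] at hx
    rcases hx.2 with h | h
    · exact h.ge
    · exact h.1.le
  have hiI : i ∈ I := by simp [hI]
  have claim : ∀ x ∈ I, ∀ a, i ≤ a → (c x < c a ↔ a < x) := by
    intro x hx a ha
    constructor
    · intro hlt
      by_contra! hle
      exact absurd hlt (not_lt.2 (hanti hle))
    · intro hlt
      rw [hI, Finset.mem_filter] at hx
      rcases hx.2 with h | h
      · exact absurd (h ▸ hlt) (not_lt.2 ha)
      · refine h.2.trans_le (hanti ?_)
        rw [Fin.lt_def] at hlt
        simp only [prv, Fin.le_def]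
        omega
  have hinj : Set.InjOn c I := by
    intro x hx y hy hxy
    rcases lt_trichotomy x y with h1 | h1 | h1
    · exact absurd hxy ((claim y hy x (hIi x hx)).2 h1).ne'
    · exact h1
    · exact absurd hxy ((claim x hx y (hIi y hy)).2 h1).ne
  have hmem : ∀ k : ℕ, ∀ a : Fin m, a.val = k → i ≤ a → c a ∈ I.image c := by
    intro k
    induction k with
    | zero =>
      intro a ha hia
      have : a = i := by rw [Fin.le_def] at hia; ext; omega
      exact Finset.mem_image_of_mem _ (this ▸ hiI)
    | succ k ih =>
      intro a ha hia
      by_cases haI : a ∈ I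
      · exact Finset.mem_image_of_mem _ haI
      · have hne : a ≠ i := fun h => haI (h ▸ hiI)
        have hlt : i < a := lt_of_le_of_ne hia (Ne.symm hne)
        have hle : c a ≤ c (prv a) := hanti (by simp only [prv, Fin.le_def]; omega)
        have hnlt : ¬ c a < c (prv a) := fun hh =>
          haI (by rw [hI, Finset.mem_filter]; exact ⟨Finset.mem_univ _, Or.inr ⟨hlt, hh⟩⟩)
        rw [le_antisymm hle (not_lt.1 hnlt)]
        apply ih
        · simp only [prv]; omega
        · rw [Fin.lt_def] at hlt
          simp only [prv, Fin.le_def]; omega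
  have hcard : I.card = (I.image c).card := (Finset.card_image_of_injOn hinj).symm
  refine ⟨(I, I.image c), ⟨?_, ?_, hcard⟩, ?_⟩
  · refine le_antisymm (Finset.min_le hiI) (Finset.le_min fun x hx => ?_)
    exact_mod_cast hIi x hx
  · have hm : 0 < m := i.pos
    let l : Fin m := ⟨m - 1, by omega⟩
    have hl : c l = j := hend l (by simp only [l]; omega)
    refine le_antisymm (Finset.min_le ?_) (Finset.le_min fun y hy => ?_)
    · rw [← hl]
      exact hmem _ l rfl (by simp only [l, Fin.le_def]; omega)
    · obtain ⟨x, _, rfl⟩ := Finset.mem_image.1 hy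
      rw [← hl]
      exact_mod_cast hanti (by simp only [l, Fin.le_def]; omega)
  · funext a
    by_cases ha : i ≤ a
    · have h1 : ((I.image c).filter (· < c a)).card = (I.image c).card - cnt I a := by
        have h2 : (I.image c).filter (· < c a) = (I.filter (a < ·)).image c := by
          ext y
          simp only [Finset.mem_filter, Finset.mem_image]
          constructor
          · rintro ⟨⟨x, hx, rfl⟩, hlt⟩
            exact ⟨x, ⟨hx, (claim x hx a ha).1 hlt⟩, rfl⟩
          · rintro ⟨x, ⟨hx, hlt⟩, rfl⟩
            exact ⟨⟨x, hx, rfl⟩, (claim x hx a ha).2 hlt⟩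
        have h3 : ((I.filter (a < ·)).image c).card = (I.filter (a < ·)).card :=
          Finset.card_image_of_injOn (hinj.mono fun x hx => (Finset.mem_filter.1 hx).1)
        have h4 := Finset.card_filter_add_card_filter_not (s := I) (· ≤ a)
        simp only [not_le] at h4
        rw [h2, h3, ← hcard]
        unfold cnt
        omega
      have h5 := sortGetD_card_lt (I.image c) (hmem _ a rfl ha) ⊤
      rw [h1] at h5
      exact h5
    · have h1 : cnt I a = 0 := by
        unfold cnt
        rw [Finset.card_eq_zero, Finset.filter_eq_empty_iff]
        intro x hx hxa
        exact ha ((hIi x hx).trans hxa)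
      unfold exitCol
      simp only [h1]
      rw [List.getD_eq_default _ _ (by simp)]
      exact le_antisymm (hpre a (not_le.1 ha) _) le_top

theorem IsCode.gammaWeight_eq {T : Matrix (Fin m) (Fin n) ℝ} (hT : EntrywisePos T)
    (h : IsCode i j P) : gammaWeight T P.1 P.2 = pathWeight T i (exitCol P) := by
  obtain ⟨I, J⟩ := P
  have hcard : I.card = J.card := h.2.2
  have hiI : i ∈ I := h.mem_row
  have hpos : 0 < I.card := Finset.card_pos.2 ⟨i, hiI⟩
  have hrow0 : ∀ d, (I.sort (· ≤ ·)).getD 0 d = i := by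
    intro d
    refine le_antisymm ((sortGetD_le_iff I hpos d i).2 (h.cnt_pos le_rfl)) ?_
    exact h.le_row (sortGetD_mem I hpos d)
  have hcond : I.Nonempty ∧ J.Nonempty ∧ I.card = J.card :=
    ⟨⟨i, hiI⟩, ⟨j, Finset.mem_of_min h.2.1⟩, hcard⟩
  unfold gammaWeight pathWeight
  rw [dif_pos hcond]
  -- rows crossed vertically contribute a factor `1`
  have hsub : ∏ a ∈ Finset.univ.filter (i < ·),
      ((T a (exitCol (I, J) (prv a)))⁻¹ * T a (exitCol (I, J) a)) =
      ∏ a ∈ I.erase i, ((T a (exitCol (I, J) (prv a)))⁻¹ * T a (exitCol (I, J) a)) := by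
    symm
    apply Finset.prod_subset
    · intro x hx
      rw [Finset.mem_erase] at hx
      exact Finset.mem_filter.2 ⟨Finset.mem_univ _, lt_of_le_of_ne (h.le_row hx.2) hx.1.symm⟩
    · intro x hx hxI
      rw [Finset.mem_filter] at hx
      have hx' : x ∉ I := fun hh => hxI (Finset.mem_erase.2 ⟨hx.2.ne', hh⟩)
      have h0 : 0 < x.val := by have := hx.2; rw [Fin.lt_def] at this; omega
      have h1 := cnt_eq_prv I h0
      rw [if_neg hx'] at h1
      have h2 : exitCol (I, J) x = exitCol (I, J) (prv x) := by
        unfold exitCol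
        simp only [h1, add_zero]
      rw [h2]
      exact inv_mul_cancel₀ (hT _ _).ne'
  have herase : I.erase i =
      (Finset.range (I.card - 1)).image fun s => (I.sort (· ≤ ·)).getD (s + 1) i := by
    ext x
    simp only [Finset.mem_erase, Finset.mem_image, Finset.mem_range]
    constructor
    · rintro ⟨hxi, hx⟩
      obtain ⟨s, hs, hsx⟩ := exists_sortGetD I hx
      have hs0 : s ≠ 0 := by
        rintro rfl
        exact hxi ((hsx i).symm.trans (hrow0 i))
      exact ⟨s - 1, by omega, by rw [show s - 1 + 1 = s by omega]; exact hsx i⟩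
    · rintro ⟨s, hs, rfl⟩
      refine ⟨?_, sortGetD_mem I (by omega) _⟩
      have := sortGetD_lt I (Nat.succ_pos s) (by omega) i i
      rw [hrow0 i] at this
      exact this.ne'
  rw [hsub, herase, Finset.prod_image]
  · simp only [hrow0]
    rw [exitCol_eq (P := (I, J)) 1 h.cnt_start one_pos (by simp only; omega) (J.min' hcond.2.1)]
    simp only [Nat.sub_zero, hcard]
    congr 1
    apply Finset.prod_congr rfl
    intro s hs
    rw [Finset.mem_range] at hs
    have hs1 : s + 1 < I.card := by omega
    rw [sortGetD_default I hs1 (I.min' hcond.1) i]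
    set a := (I.sort (· ≤ ·)).getD (s + 1) i with ha
    have haI : a ∈ I := sortGetD_mem I hs1 i
    have hca : cnt I a = s + 2 := cnt_sortGetD I hs1 i
    have hia : i < a := by
      have := sortGetD_lt I (Nat.succ_pos s) hs1 i i
      rwa [hrow0 i] at this
    have h0 : 0 < a.val := by rw [Fin.lt_def] at hia; omega
    have hcp := cnt_eq_prv I h0
    rw [if_pos haI] at hcp
    rw [exitCol_eq (P := (I, J)) (s + 2) hca (by omega) (by simp only; omega) (J.min' hcond.2.1),
      exitCol_eq (P := (I, J)) (a := prv a) (s + 1) (by simp only; omega) (by omega)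
        (by simp only; omega) (J.min' hcond.2.1)]
    simp only
    rw [show J.card - 1 - s = J.card - (s + 1) by omega,
      show J.card - 1 - (s + 1) = J.card - (s + 2) by omega]
  · intro x hx y hy hxy
    simp only [Finset.coe_range, Set.mem_Iio] at hx hy
    rcases lt_trichotomy x y with h1 | h1 | h1
    · exact absurd hxy (sortGetD_lt I (by omega) (by omega) i i).ne
    · exact h1
    · exact absurd hxy (sortGetD_lt I (by omega) (by omega) i i).ne'

/-- In row `a` a path traverses the horizontal segment between its exit column and the column in
which it arrives, the latter being the last column if `a` is the starting row. -/
theorem IsCode.mem_pathVerts (h : IsCode i j P) (v : Fin m × Fin n) :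
    v ∈ pathVerts P.1 P.2 ↔
      i ≤ v.1 ∧ exitCol P v.1 ≤ v.2 ∧ (v.1 = i ∨ v.2 ≤ exitCol P (prv v.1)) := by
  obtain ⟨a, b⟩ := v
  obtain ⟨I, J⟩ := P
  have hcard : I.card = J.card := h.2.2
  have hiI : i ∈ I := h.mem_row
  have hcs : cnt I i = 1 := h.cnt_start
  have hst : ∀ {a : Fin m}, a ∈ I → cnt I a = 1 → a = i := by
    intro a ha h1
    by_contra hne
    have hlt : i < a := lt_of_le_of_ne (h.le_row ha) (Ne.symm hne)
    have h0 : 0 < a.val := by rw [Fin.lt_def] at hlt; omega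
    have h2 := cnt_eq_prv I h0
    rw [if_pos ha] at h2
    have h3 : 0 < cnt I (prv a) := h.cnt_pos (by
      rw [Fin.lt_def] at hlt; simp only [prv, Fin.le_def]; omega)
    omega
  have hprv : ∀ {a : Fin m}, i < a → cnt I a = cnt I (prv a) + (if a ∈ I then 1 else 0) ∧
      0 < cnt I (prv a) := by
    intro a hlt
    rw [Fin.lt_def] at hlt
    exact ⟨cnt_eq_prv I (by omega), h.cnt_pos (by simp only [prv, Fin.le_def]; omega)⟩
  unfold pathVerts
  simp only [Finset.mem_filter, Finset.mem_univ, true_and, Finset.mem_range]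
  constructor
  · rintro (⟨s, hs, hsa, hb1, hb2⟩ | ⟨s, hs, hsb, ha1, ha2⟩)
    · have haI : a ∈ I := hsa ▸ sortGetD_mem I hs a
      have hca : cnt I a = s + 1 := by
        conv_lhs => rw [hsa]
        exact cnt_sortGetD I hs a
      refine ⟨h.le_row haI, ?_, ?_⟩
      · rw [exitCol_eq (P := (I, J)) (s + 1) hca (by omega) (by simp only; omega) b]
        simp only
        rwa [show J.card - (s + 1) = J.card - 1 - s by omega]
      · rcases Nat.eq_zero_or_pos s with h0 | h0
        · exact Or.inl (hst haI (by omega))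
        · right
          have hlt : i < a := by
            refine lt_of_le_of_ne (h.le_row haI) ?_
            rintro rfl
            omega
          have h2 := (hprv hlt).1
          rw [if_pos haI] at h2
          rw [exitCol_eq (P := (I, J)) (a := prv a) s (by simp only; omega) h0
            (by simp only; omega) b]
          exact hb2.resolve_left (by omega)
    · have hsc : s < cnt I a := (sortGetD_le_iff I hs a a).1 ha1
      have hia : i ≤ a := (h.le_row (sortGetD_mem I hs a)).trans ha1
      have hb : ∀ a' : Fin m, cnt I a' = s + 1 → exitCol (I, J) a' = b := by
        intro a' ha'
        rw [exitCol_eq (P := (I, J)) (s + 1) ha' (by omega) (by simp only; omega) b]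
        simp only
        rw [show J.card - (s + 1) = J.card - 1 - s by omega]
        exact hsb.symm
      have hcle : cnt I a ≤ I.card := cnt_le_card I a
      by_cases hc : cnt I a = s + 1
      · refine ⟨hia, (hb a hc).le, Or.inr ?_⟩
        rw [← hb a hc]
        exact h.antitone (by simp only [prv, Fin.le_def]; omega)
      · -- the path arrives at the next turning row from above
        have hs1 : s + 1 < I.card := by omega
        have hle : (I.sort (· ≤ ·)).getD (s + 1) a ≤ a :=
          (sortGetD_le_iff I hs1 a a).2 (by omega)
        have hae : a = (I.sort (· ≤ ·)).getD (s + 1) a :=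
          le_antisymm (ha2.resolve_left (by omega)) hle
        have haI : a ∈ I := hae ▸ sortGetD_mem I hs1 a
        have hca : cnt I a = s + 2 := by
          conv_lhs => rw [hae]
          exact cnt_sortGetD I hs1 a
        have hlt : i < a := by
          refine lt_of_le_of_ne hia ?_
          rintro rfl
          omega
        have h2 := (hprv hlt).1
        rw [if_pos haI] at h2
        have h3 := hb (prv a) (by omega)
        refine ⟨hia, ?_, Or.inr h3.ge⟩
        rw [← h3]
        exact h.antitone (by simp only [prv, Fin.le_def]; omega)
  · rintro ⟨hia, hb1, hb2⟩
    have hpos : 0 < cnt I a := h.cnt_pos hia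
    have hcle : cnt I a ≤ I.card := cnt_le_card I a
    have hea := exitCol_eq (P := (I, J)) (cnt I a) rfl hpos (by simp only; omega) b
    simp only at hea
    by_cases haI : a ∈ I
    · left
      obtain ⟨s, hs, hsa⟩ := exists_sortGetD I haI
      have hca : cnt I a = s + 1 := by
        conv_lhs => rw [← hsa a]
        exact cnt_sortGetD I hs a
      refine ⟨s, hs, (hsa a).symm, ?_, ?_⟩
      · rw [hea, hca] at hb1
        rwa [show J.card - 1 - s = J.card - (s + 1) by omega]
      · rcases hb2 with rfl | hb2
        · left; omega
        · rcases Nat.eq_zero_or_pos s with h0 | h0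
          · exact Or.inl h0
          · right
            have hlt : i < a := by
              refine lt_of_le_of_ne hia ?_
              rintro rfl
              omega
            have h2 := (hprv hlt).1
            rw [if_pos haI] at h2
            rwa [exitCol_eq (P := (I, J)) (a := prv a) s (by simp only; omega) h0
              (by simp only; omega) b] at hb2
    · right
      have hne : a ≠ i := fun hh => haI (hh ▸ hiI)
      have hlt : i < a := lt_of_le_of_ne hia (Ne.symm hne)
      have h2 := (hprv hlt).1
      rw [if_neg haI, add_zero] at h2
      have h3 : exitCol (I, J) (prv a) = exitCol (I, J) a := by
        unfold exitCol
        simp only [h2]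
      rw [h3] at hb2
      have hbe : b = exitCol (I, J) a := le_antisymm (hb2.resolve_left hne) hb1
      refine ⟨cnt I a - 1, by omega, ?_, ?_, ?_⟩
      · rw [show J.card - 1 - (cnt I a - 1) = J.card - cnt I a by omega]
        exact hbe.trans hea
      · exact (sortGetD_le_iff I (by omega) a a).2 (by omega)
      · by_cases hlast : cnt I a - 1 + 1 = I.card
        · exact Or.inl hlast
        · right
          by_contra! hgt
          have := (sortGetD_le_iff I (by omega) a a).1 hgt.le
          omega

end Code

/-! ### The tail-swapping involution -/

section Swap

variable {m n r : ℕ}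

/-- At row `a` the `t`-th path leaves in a column weakly to the left of the one in which the
preceding path arrives. -/
def Crosses (f : Fin r → Fin m) (c : Fin r → Fin m → Fin n) (a : Fin m) (t : Fin r) : Prop :=
  0 < t.val ∧ f t ≤ a ∧ c t a ≤ c (prv t) (prv a)

/-- `(a, t)` is the place where tails are swapped: `a` is the first row with a crossing, and `t` is
the last path involved in a crossing in that row. Taking the last path makes the choice invariant
under the swap. -/
def IsFirst (f : Fin r → Fin m) (c : Fin r → Fin m → Fin n) (a : Fin m) (t : Fin r) : Prop :=
  Crosses f c a t ∧ (∀ a' < a, ∀ t', ¬ Crosses f c a' t') ∧ ∀ t' > t, ¬ Crosses f c a t'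

/-- Exchange the paths `t - 1` and `t` from row `a` on. -/
def swapTail (c : Fin r → Fin m → Fin n) (a : Fin m) (t : Fin r) : Fin r → Fin m → Fin n :=
  fun s b => if a ≤ b then c (Equiv.swap (prv t) t s) b else c s b

theorem prv_ne {t : Fin r} (ht : 0 < t.val) : prv t ≠ t := by
  simp only [ne_eq, prv, Fin.ext_iff]
  omega

theorem prv_lt {t : Fin r} (ht : 0 < t.val) : prv t < t := by
  simp only [prv, Fin.lt_def]
  omega

theorem prv_le (t : Fin r) : prv t ≤ t := by
  simp only [prv, Fin.le_def]
  omega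

theorem le_prv {s t : Fin r} (h : s < t) : s ≤ prv t := by
  rw [Fin.lt_def] at h
  simp only [prv, Fin.le_def]
  omega

theorem exists_isFirst (f : Fin r → Fin m) (c : Fin r → Fin m → Fin n)
    (h : ∃ a t, Crosses f c a t) : ∃ p : Fin m × Fin r, IsFirst f c p.1 p.2 := by
  obtain ⟨a, ⟨t, hat⟩, hmin⟩ :=
    (wellFounded_lt (α := Fin m)).has_min {a | ∃ t, Crosses f c a t} h
  obtain ⟨t', ht', hmax⟩ :=
    (wellFounded_gt (α := Fin r)).has_min {t | Crosses f c a t} ⟨t, hat⟩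
  exact ⟨(a, t'), ht', fun a' ha' s hs => hmin a' ⟨s, hs⟩ ha', fun s hs hc => hmax s hc hs⟩

theorem IsFirst.unique {f : Fin r → Fin m} {c : Fin r → Fin m → Fin n} {a a' : Fin m}
    {t t' : Fin r} (h : IsFirst f c a t) (h' : IsFirst f c a' t') : a = a' ∧ t = t' := by
  have ha : a = a' := by
    rcases lt_trichotomy a a' with h1 | h1 | h1
    · exact absurd h.1 (h'.2.1 a h1 t)
    · exact h1
    · exact absurd h'.1 (h.2.1 a' h1 t')
  subst ha
  refine ⟨rfl, ?_⟩
  rcases lt_trichotomy t t' with h1 | h1 | h1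
  · exact absurd h'.1 (h.2.2 t' h1)
  · exact h1
  · exact absurd h.1 (h'.2.2 t h1)

theorem swapTail_swapTail (c : Fin r → Fin m → Fin n) (a : Fin m) (t : Fin r) :
    swapTail (swapTail c a t) a t = c := by
  funext s b
  unfold swapTail
  split_ifs <;> simp

theorem swapTail_of_lt (c : Fin r → Fin m → Fin n) {a b : Fin m} (t s : Fin r) (hb : b < a) :
    swapTail c a t s b = c s b := if_neg (not_le.2 hb)

theorem swapTail_of_le (c : Fin r → Fin m → Fin n) {a b : Fin m} (t s : Fin r) (hb : a ≤ b) :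
    swapTail c a t s b = c (Equiv.swap (prv t) t s) b := if_pos hb

theorem Crosses.row_pos {f : Fin r → Fin m} (hf : StrictMono f) {c : Fin r → Fin m → Fin n}
    {a : Fin m} {t : Fin r} (h : Crosses f c a t) : f (prv t) < a :=
  (hf (prv_lt h.1)).trans_le h.2.1

theorem prv_lt_of_lt {x y : Fin m} (h : x < y) : prv y < y := by
  rw [Fin.lt_def] at h ⊢
  simp only [prv]
  omega

theorem IsFirst.swapTail {f : Fin r → Fin m} (hf : StrictMono f) {c : Fin r → Fin m → Fin n}
    {a : Fin m} {t : Fin r} (hanti : ∀ s, Antitone (c s)) (h : IsFirst f c a t) :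
    IsFirst f (swapTail c a t) a t := by
  have hpa : prv a < a := prv_lt_of_lt (h.1.row_pos hf)
  refine ⟨⟨h.1.1, h.1.2.1, ?_⟩, ?_, ?_⟩
  · rw [swapTail_of_le c t t le_rfl, swapTail_of_lt c t (prv t) hpa, Equiv.swap_apply_right]
    exact hanti _ hpa.le
  · rintro a' ha' t' ⟨h1, h2, h3⟩
    rw [swapTail_of_lt c t _ ha', swapTail_of_lt c t _ ((prv_le a').trans_lt ha')] at h3
    exact h.2.1 a' ha' t' ⟨h1, h2, h3⟩
  · rintro t' ht' ⟨h1, h2, h3⟩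
    rw [swapTail_of_le c t _ le_rfl, swapTail_of_lt c t _ hpa,
      Equiv.swap_apply_of_ne_of_ne ((prv_le t).trans_lt ht').ne' ht'.ne'] at h3
    exact h.2.2 t' ht' ⟨h1, h2, h3⟩

/-- Before the first crossing the paths are in order, so at `(a, t)` the other half of the condition
for the two horizontal segments to overlap holds as well. -/
theorem IsFirst.other_le {f : Fin r → Fin m} (hf : StrictMono f) {c : Fin r → Fin m → Fin n}
    {a : Fin m} {t : Fin r} {g : Fin r → Fin n} (hc : ∀ s, IsPath (f s) (g s) (c s))
    (h : IsFirst f c a t) : c (prv t) a ≤ c t (prv a) := by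
  have hpa : prv a < a := prv_lt_of_lt (h.1.row_pos hf)
  by_cases hta : f t ≤ prv a
  · have h1 : ¬ c t (prv a) ≤ c (prv t) (prv (prv a)) := fun hh =>
      h.2.1 (prv a) hpa t ⟨h.1.1, hta, hh⟩
    exact ((hc _).1 ((prv_le _).trans hpa.le)).trans (not_le.1 h1).le
  · exact (hc t).2.1 _ (not_le.1 hta) _

theorem antitone_glue {c d : Fin m → Fin n} (hc : Antitone c) (hd : Antitone d) {a : Fin m}
    (h : d a ≤ c (prv a)) : Antitone fun b => if a ≤ b then d b else c b := by
  intro x y hxy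
  by_cases hx : a ≤ x
  · simp only [if_pos hx, if_pos (hx.trans hxy)]
    exact hd hxy
  · by_cases hy : a ≤ y
    · simp only [if_neg hx, if_pos hy]
      exact (hd hy).trans (h.trans (hc (le_prv (not_le.1 hx))))
    · simp only [if_neg hx, if_neg hy]
      exact hc hxy

theorem IsFirst.isPath_swapTail {f : Fin r → Fin m} (hf : StrictMono f)
    {c : Fin r → Fin m → Fin n} {a : Fin m} {t : Fin r} {g : Fin r → Fin n}
    (hc : ∀ s, IsPath (f s) (g s) (c s)) (h : IsFirst f c a t) (s : Fin r) :
    IsPath (f s) (g (Equiv.swap (prv t) t s)) (_root_.swapTail c a t s) := by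
  have hne := prv_ne h.1.1
  have hfs : s = prv t ∨ s = t → f s ≤ a := by
    rintro (rfl | rfl)
    · exact (h.1.row_pos hf).le
    · exact h.1.2.1
  refine ⟨?_, ?_, ?_⟩
  · apply antitone_glue (hc _).1 (hc _).1
    by_cases h1 : s = prv t
    · subst h1
      rw [Equiv.swap_apply_left]
      exact h.1.2.2
    · by_cases h2 : s = t
      · subst h2
        rw [Equiv.swap_apply_right]
        exact h.other_le hf hc
      · rw [Equiv.swap_apply_of_ne_of_ne h1 h2]
        exact (hc s).1 (prv_le a)
  · intro b hb y
    by_cases h1 : s = prv t ∨ s = t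
    · rw [swapTail_of_lt c t s (hb.trans_le (hfs h1))]
      exact (hc s).2.1 b hb y
    · rw [not_or] at h1
      unfold _root_.swapTail
      rw [Equiv.swap_apply_of_ne_of_ne h1.1 h1.2, ite_self]
      exact (hc s).2.1 b hb y
  · intro b hb
    rw [swapTail_of_le c t s (by rw [Fin.le_def]; omega)]
    exact (hc _).2.2 b hb

/-- The contribution of row `a` to the weight of a path starting in row `i`. -/
noncomputable def rowWeight (T : Matrix (Fin m) (Fin n) ℝ) (i : Fin m) (c : Fin m → Fin n)
    (a : Fin m) : ℝ :=
  if i < a then (T a (c (prv a)))⁻¹ * T a (c a) else if a = i then T a (c a) else 1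

theorem pathWeight_eq_prod (T : Matrix (Fin m) (Fin n) ℝ) (i : Fin m) (c : Fin m → Fin n) :
    pathWeight T i c = ∏ a, rowWeight T i c a := by
  unfold pathWeight rowWeight
  have hi : i ∈ Finset.univ.filter fun a => ¬ i < a :=
    Finset.mem_filter.2 ⟨Finset.mem_univ _, lt_irrefl i⟩
  rw [Finset.prod_ite, mul_comm, Finset.prod_ite_eq', if_pos hi]

theorem IsFirst.prod_pathWeight {f : Fin r → Fin m} (hf : StrictMono f)
    {c : Fin r → Fin m → Fin n} {a : Fin m} {t : Fin r} (h : IsFirst f c a t)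
    (T : Matrix (Fin m) (Fin n) ℝ) :
    ∏ s, pathWeight T (f s) (_root_.swapTail c a t s) = ∏ s, pathWeight T (f s) (c s) := by
  have hft := h.1.2.1
  have hfp := h.1.row_pos hf
  have hne := prv_ne h.1.1
  simp only [pathWeight_eq_prod]
  rw [Finset.prod_comm, Finset.prod_comm (s := Finset.univ) (t := Finset.univ)
    (f := fun s b => rowWeight T (f s) (c s) b)]
  apply Finset.prod_congr rfl
  intro b _
  rcases lt_trichotomy b a with hb | hb | hb
  · apply Finset.prod_congr rfl
    intro s _
    unfold rowWeight
    rw [swapTail_of_lt c t s hb, swapTail_of_lt c t s ((prv_le b).trans_lt hb)]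
  · -- in row `a` only the two exit columns are exchanged
    subst hb
    have hpb : prv b < b := prv_lt_of_lt hfp
    have hsplit : ∀ c' : Fin r → Fin m → Fin n, ∏ s, rowWeight T (f s) (c' s) b =
        (∏ s, if f s < b then (T b (c' s (prv b)))⁻¹ else 1) *
          ∏ s, if f s ≤ b then T b (c' s b) else 1 := by
      intro c'
      rw [← Finset.prod_mul_distrib]
      apply Finset.prod_congr rfl
      intro s _
      unfold rowWeight
      rcases lt_trichotomy (f s) b with h1 | h1 | h1
      · simp [h1, h1.le]
      · simp [h1]
      · simp [h1.not_ge, h1.not_gt, h1.ne]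
    rw [hsplit, hsplit]
    congr 1
    · apply Finset.prod_congr rfl
      intro s _
      rw [swapTail_of_lt c t s hpb]
    · refine Fintype.prod_equiv (Equiv.swap (prv t) t) _ _ ?_
      intro s
      rw [swapTail_of_le c t s le_rfl]
      by_cases h1 : s = prv t
      · subst h1
        rw [Equiv.swap_apply_left, if_pos hft, if_pos hfp.le]
      · by_cases h2 : s = t
        · subst h2
          rw [Equiv.swap_apply_right, if_pos hft, if_pos hfp.le]
        · rw [Equiv.swap_apply_of_ne_of_ne h1 h2]
  · refine Fintype.prod_equiv (Equiv.swap (prv t) t) _ _ ?_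
    intro s
    unfold rowWeight
    rw [swapTail_of_le c t s hb.le, swapTail_of_le c t s (le_prv hb)]
    by_cases h1 : s = prv t
    · subst h1
      rw [Equiv.swap_apply_left, if_pos (hft.trans_lt hb), if_pos (hfp.trans hb)]
    · by_cases h2 : s = t
      · subst h2
        rw [Equiv.swap_apply_right, if_pos (hft.trans_lt hb), if_pos (hfp.trans hb)]
      · rw [Equiv.swap_apply_of_ne_of_ne h1 h2]

/-- Without crossings, in every row all paths lie strictly to the left of the later ones. -/
theorem lt_of_not_crosses {f : Fin r → Fin m} (hf : StrictMono f) {c : Fin r → Fin m → Fin n}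
    (hanti : ∀ s, Antitone (c s)) (hno : ∀ a t, ¬ Crosses f c a t) (a : Fin m) (s : Fin r) :
    ∀ k : ℕ, ∀ t : Fin r, t.val = k → s < t → f t ≤ a → c s (prv a) < c t a := by
  intro k
  induction k with
  | zero =>
    intro t ht hst
    rw [Fin.lt_def] at hst
    omega
  | succ k ih =>
    intro t ht hst hta
    have h1 : c (prv t) (prv a) < c t a := by
      by_contra! hle
      exact hno a t ⟨by omega, hta, hle⟩
    rcases (le_prv hst).eq_or_lt with h2 | h2
    · exact h2 ▸ h1
    · have h3 := ih (prv t) (by simp only [prv]; omega) h2 ((hf.monotone (prv_le t)).trans hta)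
      exact (h3.trans_le (hanti _ (prv_le a))).trans h1

/-- A system without crossings joins the sources to the sinks in order. -/
theorem perm_eq_one_of_not_crosses {f : Fin r → Fin m} (hf : StrictMono f)
    {g : Fin r → Fin n} (hg : StrictMono g) {c : Fin r → Fin m → Fin n} {σ : Equiv.Perm (Fin r)}
    (hc : ∀ s, IsPath (f s) (g (σ s)) (c s)) (hno : ∀ a t, ¬ Crosses f c a t) : σ = 1 := by
  have hmono : StrictMono σ := by
    intro s t hst
    have hm : 0 < m := (f s).pos
    let l : Fin m := ⟨m - 1, by omega⟩
    have hl : l.val + 1 = m := by simp only [l]; omega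
    have h1 := lt_of_not_crosses hf (fun s => (hc s).1) hno l s _ t rfl hst
      (by rw [Fin.le_def]; omega)
    have h2 := ((hc s).1 (prv_le l)).trans_lt h1
    rw [(hc s).2.2 l hl, (hc t).2.2 l hl] at h2
    exact hg.lt_iff_lt.1 h2
  ext s
  have := Subsingleton.elim (hmono.orderIsoOfSurjective σ σ.surjective) (OrderIso.refl _)
  have h := DFunLike.congr_fun this s
  simpa using congrArg Fin.val h

open Classical in
/-- If the entries of `M` are the path sums, the systems with a crossing cancel in the expansion of
`det M`. -/
theorem det_eq_sum_of_not_crosses (T : Matrix (Fin m) (Fin n) ℝ) {f : Fin r → Fin m}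
    (hf : StrictMono f) {g : Fin r → Fin n} (hg : StrictMono g) (M : Matrix (Fin r) (Fin r) ℝ)
    (hM : ∀ s t, M s t =
      ∑ c ∈ Finset.univ.filter (IsPath (f s) (g t)), pathWeight T (f s) c) :
    M.det = ∑ c ∈ Finset.univ.filter (fun c : Fin r → Fin m → Fin n =>
      (∀ s, IsPath (f s) (g s) (c s)) ∧ ∀ a t, ¬ Crosses f c a t),
      ∏ s, pathWeight T (f s) (c s) := by
  set R : Finset (Equiv.Perm (Fin r) × (Fin r → Fin m → Fin n)) :=
    Finset.univ.filter fun x => ∀ s, IsPath (f s) (g (x.1 s)) (x.2 s) with hR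
  set F : Equiv.Perm (Fin r) × (Fin r → Fin m → Fin n) → ℝ :=
    fun x => ((Equiv.Perm.sign x.1 : ℤ) : ℝ) * ∏ s, pathWeight T (f s) (x.2 s) with hF
  have hdet : M.det = ∑ x ∈ R, F x := by
    rw [Finset.sum_finset_product R Finset.univ
      (fun σ => Fintype.piFinset fun s => Finset.univ.filter (IsPath (f s) (g (σ s))))
      (by intro x; simp [hR, Fintype.mem_piFinset])]
    rw [← Matrix.det_transpose, Matrix.det_apply']
    apply Finset.sum_congr rfl
    intro σ _
    simp only [hF, Matrix.transpose_apply, hM]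
    rw [Finset.prod_univ_sum, Finset.mul_sum]
  have hmemR : ∀ {x}, x ∈ R ↔ ∀ s, IsPath (f s) (g (x.1 s)) (x.2 s) := by
    intro x
    simp [hR]
  have hzero : ∑ x ∈ R.filter (fun x => ¬ ∀ a t, ¬ Crosses f x.2 a t), F x = 0 := by
    rcases (R.filter fun x => ¬ ∀ a t, ¬ Crosses f x.2 a t).eq_empty_or_nonempty with h0 | ⟨x₀, hx₀⟩
    · rw [h0, Finset.sum_empty]
    have hch : ∀ x ∈ R.filter (fun x => ¬ ∀ a t, ¬ Crosses f x.2 a t),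
        ∃ p : Fin m × Fin r, IsFirst f x.2 p.1 p.2 := by
      intro x hx
      have := (Finset.mem_filter.1 hx).2
      push Not at this
      exact exists_isFirst f x.2 this
    have : Nonempty (Fin m × Fin r) := ⟨(hch x₀ hx₀).choose⟩
    choose! p hp using hch
    set inv : Equiv.Perm (Fin r) × (Fin r → Fin m → Fin n) →
        Equiv.Perm (Fin r) × (Fin r → Fin m → Fin n) :=
      fun x => (x.1 * Equiv.swap (prv (p x).2) (p x).2, swapTail x.2 (p x).1 (p x).2) with hinv
    have hinvFirst : ∀ x ∈ R.filter (fun x => ¬ ∀ a t, ¬ Crosses f x.2 a t),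
        IsFirst f (inv x).2 (p x).1 (p x).2 := fun x hx =>
      (hp x hx).swapTail hf fun s => (hmemR.1 (Finset.mem_filter.1 hx).1 s).1
    have hinvMem : ∀ x ∈ R.filter (fun x => ¬ ∀ a t, ¬ Crosses f x.2 a t),
        inv x ∈ R.filter (fun x => ¬ ∀ a t, ¬ Crosses f x.2 a t) := by
      intro x hx
      rw [Finset.mem_filter]
      refine ⟨hmemR.2 fun s => ?_, fun hh => hh _ _ (hinvFirst x hx).1⟩
      exact (hp x hx).isPath_swapTail (g := fun s => g (x.1 s)) hf
        (hmemR.1 (Finset.mem_filter.1 hx).1) s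
    refine Finset.sum_involution (fun x _ => inv x) ?_ ?_ (fun x hx => hinvMem x hx) ?_
    · intro x hx
      have hw := (hp x hx).prod_pathWeight hf T
      simp only [hF, hinv]
      rw [hw, Equiv.Perm.sign_mul, Equiv.Perm.sign_swap (prv_ne (hp x hx).1.1)]
      push_cast
      ring
    · intro x hx _ heq
      have h1 : x.1 * Equiv.swap (prv (p x).2) (p x).2 = x.1 := congrArg Prod.fst heq
      rw [mul_eq_left, Equiv.swap_eq_one_iff] at h1
      exact prv_ne (hp x hx).1.1 h1
    · intro x hx
      have hpe : p (inv x) = p x := by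
        have := (hp (inv x) (hinvMem x hx)).unique (hinvFirst x hx)
        exact Prod.ext this.1 this.2
      change (((inv x).1 * Equiv.swap (prv (p (inv x)).2) (p (inv x)).2,
        swapTail (inv x).2 (p (inv x)).1 (p (inv x)).2) : _ × _) = x
      rw [hpe]
      refine Prod.ext ?_ (swapTail_swapTail _ _ _)
      simp only [hinv]
      rw [mul_assoc, Equiv.swap_mul_self, mul_one]
  rw [hdet, ← Finset.sum_filter_add_sum_filter_not R (fun x => ∀ a t, ¬ Crosses f x.2 a t), hzero,
    add_zero]
  symm
  refine Finset.sum_bij (fun c _ => (1, c)) ?_ ?_ ?_ ?_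
  · intro c hc
    rw [Finset.mem_filter] at hc
    exact Finset.mem_filter.2 ⟨hmemR.2 hc.2.1, hc.2.2⟩
  · intro c _ c' _ h
    exact congrArg Prod.snd h
  · rintro ⟨σ, c⟩ hx
    rw [Finset.mem_filter, hmemR] at hx
    obtain rfl := perm_eq_one_of_not_crosses hf hg hx.1 hx.2
    exact ⟨c, Finset.mem_filter.2 ⟨Finset.mem_univ _, hx.1, hx.2⟩, rfl⟩
  · intro c _
    simp [hF]

end Swap

/-! ### Vertex-disjoint systems -/

section Main

variable {m n r : ℕ}

theorem pathWeight_pos {T : Matrix (Fin m) (Fin n) ℝ} (hT : EntrywisePos T) (i : Fin m)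
    (c : Fin m → Fin n) : 0 < pathWeight T i c :=
  mul_pos (hT _ _) (Finset.prod_pos fun _ _ => mul_pos (inv_pos.2 (hT _ _)) (hT _ _))

/-- The system in which every path has a single Γ-turn is vertex-disjoint. -/
theorem primary_disjoint {f : Fin r → Fin m} (hf : StrictMono f) {g : Fin r → Fin n}
    (hg : StrictMono g) (t t' : Fin r) (hne : t ≠ t') :
    Disjoint (pathVerts {f t} {g t}) (pathVerts {f t'} {g t'}) := by
  have hv : ∀ (i : Fin m) (j : Fin n) (v : Fin m × Fin n),
      v ∈ pathVerts {i} {j} → v.1 = i ∧ j ≤ v.2 ∨ v.2 = j ∧ i ≤ v.1 := by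
    intro i j v hv
    simpa [pathVerts] using hv
  rw [Finset.disjoint_left]
  intro v h1 h2
  have h1 := hv _ _ _ h1
  have h2 := hv _ _ _ h2
  rcases lt_or_gt_of_ne hne with h | h
  all_goals
    have h3 := hf h
    have h4 := hg h
    rcases h1 with ⟨h5, h6⟩ | ⟨h5, h6⟩ <;> rcases h2 with ⟨h7, h8⟩ | ⟨h7, h8⟩ <;>
      rw [h5] at * <;> order

variable [NeZero n]

open Classical in
theorem XGamma_apply {T : Matrix (Fin m) (Fin n) ℝ} (hT : EntrywisePos T) (i : Fin m)
    (j : Fin n) :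
    XGamma T i j = ∑ c ∈ Finset.univ.filter (IsPath i j), pathWeight T i c := by
  unfold XGamma
  rw [Matrix.of_apply]
  rw [← Finset.sum_finset_product (Finset.univ.filter (IsCode i j)) _ _
    (f := fun P => gammaWeight T P.1 P.2)
    (by intro P; simp [IsCode, eq_comm])]
  refine Finset.sum_bij (fun P _ => exitCol P) ?_ ?_ ?_ ?_
  · intro P hP
    exact Finset.mem_filter.2 ⟨Finset.mem_univ _, (Finset.mem_filter.1 hP).2.isPath⟩
  · intro P hP P' hP' he
    exact (Finset.mem_filter.1 hP).2.exitCol_injective (Finset.mem_filter.1 hP').2 he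
  · intro c hc
    obtain ⟨P, hP, he⟩ := (Finset.mem_filter.1 hc).2.exists_code
    exact ⟨P, Finset.mem_filter.2 ⟨Finset.mem_univ _, hP⟩, he⟩
  · intro P hP
    exact (Finset.mem_filter.1 hP).2.gammaWeight_eq hT

theorem disjoint_iff_not_crosses {f : Fin r → Fin m} (hf : StrictMono f) {g : Fin r → Fin n}
    {P : Fin r → Finset (Fin m) × Finset (Fin n)} (hP : ∀ t, IsCode (f t) (g t) (P t)) :
    (∀ t t', t ≠ t' → Disjoint (pathVerts (P t).1 (P t).2) (pathVerts (P t').1 (P t').2)) ↔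
      ∀ a t, ¬ Crosses f (fun t => exitCol (P t)) a t := by
  constructor
  · intro hdis a t hat
    obtain ⟨⟨a, t⟩, h⟩ := exists_isFirst f _ ⟨a, t, hat⟩
    have hpa := h.1.row_pos hf
    have hother := h.other_le hf fun s => (hP s).isPath
    -- the end of the horizontal segment of the earlier path is a common vertex
    refine Finset.disjoint_left.1 (hdis (prv t) t (prv_ne h.1.1))
      (show (a, exitCol (P (prv t)) (prv a)) ∈ _ from ?_) ?_
    · rw [(hP _).mem_pathVerts]
      exact ⟨hpa.le, (hP _).antitone (prv_le a), Or.inr le_rfl⟩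
    · rw [(hP _).mem_pathVerts]
      refine ⟨h.1.2.1, h.1.2.2, ?_⟩
      by_cases hta : f t = a
      · exact Or.inl hta.symm
      · right
        have hlt : f t < a := lt_of_le_of_ne h.1.2.1 hta
        have h1 := h.2.1 (prv a) (prv_lt_of_lt hlt) t
        have h2 : ¬ exitCol (P t) (prv a) ≤ exitCol (P (prv t)) (prv (prv a)) := fun hh =>
          h1 ⟨h.1.1, le_prv hlt, hh⟩
        exact ((hP _).antitone (prv_le _)).trans (not_le.1 h2).le
  · intro hno
    have key : ∀ t t', t < t' →
        Disjoint (pathVerts (P t).1 (P t).2) (pathVerts (P t').1 (P t').2) := by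
      intro t t' htt
      rw [Finset.disjoint_left]
      rintro ⟨a, b⟩ h1 h2
      rw [(hP _).mem_pathVerts] at h1 h2
      have hlt := lt_of_not_crosses hf (fun s => (hP s).antitone) hno a t _ t' rfl htt h2.1
      have hne : a ≠ f t := ((hf htt).trans_le h2.1).ne'
      exact absurd (h1.2.2.resolve_left hne) (not_le.2 (hlt.trans_le h2.2.1))
    intro t t' hne
    rcases lt_or_gt_of_ne hne with h | h
    · exact key t t' h
    · exact (key t' t h).symm

end Main

/-- the Lindström–Gessel–Viennot lemma for `X_Γ(T)`: each minor of
`X_Γ(T)` is the sum, over all vertex-disjoint path systems joining the chosen rows to the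
chosen columns, of the products of the path weights; in particular it is positive. -/
theorem lindstrom_gessel_viennot {m n : ℕ} (T : Matrix (Fin m) (Fin n) ℝ)
    (hT : EntrywisePos T) (r : ℕ) (f : Fin r → Fin m) (g : Fin r → Fin n)
    (hf : StrictMono f) (hg : StrictMono g) :
    (((XGamma T).submatrix f g).det =
      ∑ P ∈ Finset.univ.filter
          (fun P : Fin r → Finset (Fin m) × Finset (Fin n) =>
            (∀ t, (P t).1.min = (f t : WithTop (Fin m)) ∧
                  (P t).2.min = (g t : WithTop (Fin n)) ∧
                  (P t).1.card = (P t).2.card) ∧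
            ∀ t t', t ≠ t' →
              Disjoint (pathVerts (P t).1 (P t).2) (pathVerts (P t').1 (P t').2)),
        ∏ t, gammaWeight T (P t).1 (P t).2) ∧
    0 < ((XGamma T).submatrix f g).det := by
  classical
  rcases Nat.eq_zero_or_pos r with rfl | hr
  · simp
  have : NeZero n := ⟨(g ⟨0, hr⟩).pos.ne'⟩
  have hdet := det_eq_sum_of_not_crosses T hf hg ((XGamma T).submatrix f g)
    fun s t => XGamma_apply hT (f s) (g t)
  have hcode : ∀ t, IsCode (f t) (g t) (({f t}, {g t}) : Finset (Fin m) × Finset (Fin n)) :=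
    fun t => ⟨Finset.min_singleton, Finset.min_singleton, by simp⟩
  refine ⟨?_, ?_⟩
  · rw [hdet]
    symm
    refine Finset.sum_bij (fun P _ t => exitCol (P t)) ?_ ?_ ?_ ?_
    · intro P hP
      have hP := (Finset.mem_filter.1 hP).2
      exact Finset.mem_filter.2 ⟨Finset.mem_univ _, fun t => IsCode.isPath (hP.1 t),
        (disjoint_iff_not_crosses hf hP.1).1 hP.2⟩
    · intro P hP P' hP' he
      funext t
      exact IsCode.exitCol_injective ((Finset.mem_filter.1 hP).2.1 t)
        ((Finset.mem_filter.1 hP').2.1 t) (congrFun he t)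
    · intro c hc
      have hc := (Finset.mem_filter.1 hc).2
      choose P hP he using fun t => (hc.1 t).exists_code
      have hce : (fun t => exitCol (P t)) = c := funext he
      exact ⟨P, Finset.mem_filter.2 ⟨Finset.mem_univ _, hP,
        (disjoint_iff_not_crosses hf hP).2 (hce ▸ hc.2)⟩, hce⟩
    · intro P hP
      exact Finset.prod_congr rfl fun t _ =>
        IsCode.gammaWeight_eq hT ((Finset.mem_filter.1 hP).2.1 t)
  · rw [hdet]
    refine Finset.sum_pos (fun c _ => Finset.prod_pos fun s _ => pathWeight_pos hT _ _)
      ⟨fun t => exitCol ({f t}, {g t}), Finset.mem_filter.2 ⟨Finset.mem_univ _,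
        fun t => (hcode t).isPath, ?_⟩⟩
    exact (disjoint_iff_not_crosses hf hcode).1 (primary_disjoint hf hg)
end
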